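/- Let κ be a field, T an indeterminate, and k = κ(T). Let α : G → Aut(L/k) be a finite embedding problem over k, and let T' = (T₁,…,Tₙ) be a tuple of algebraically independent indeterminates over k (n ≥ 1). Suppose the induced embedding problem α_{k(T')} has a solution with solution field E, and suppose that every element of E algebraic over κ lies in L (i.e., E ∩ κ̄ = L ∩ κ̄). Let B denote the integral closure of k[T₁,…,Tₙ] in E. Then there exist t ∈ kⁿ and a maximal ideal P of B lying over ⟨T₁ − t₁, …, Tₙ − tₙ⟩ such that the residue field E_t = B/P (which contains the image of L) is the solution field of a solution β to α which is regular, i.e., every element of E_t algebraic over κ lies in L. -/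

import Mathlib

set_option synthInstance.maxHeartbeats 1000000
set_option maxHeartbeats 1000000

/-!
A residue field of `B` at a `k`-rational point `t` sees all of `Aut(E/K)` and no new constants once
finitely many polynomials over `F[T][T₁, …, Tₙ]` that have no root there acquire none in `F[T]` when
`t` is substituted, where `F = κˢ`: an intermediate field of the Galois closure whose integral
elements all become constant modulo a prime then consists of constants. To find `t`, choose its
coordinates one at a time among the polynomials `z + T ^ m` with integer coefficients. For `m` in a
long window the roots of an irreducible `h` of degree `d ≥ 2` at these points are close together in
`F⟦T⟧`, so that a determinant of monomials in points and roots vanishes, being divisible by a higher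
power of `T` than its degree allows. Hence all of these points lie on an auxiliary curve of degree
`< d` in the root variable, which meets `h = 0` in few points; so the bad exponents `m` are sparse.
Integer coefficients make `t` a point over `κ` although the substitution is controlled over `F`.
-/

section DeterminantMethod

open Polynomial

variable {O : Type*} [CommRing O]

lemma choose_two_le_sum_of_injective {ι : Type*} [Fintype ι] {f : ι → ℕ}
    (hf : Function.Injective f) : (Fintype.card ι).choose 2 ≤ ∑ i, f i := by
  classical
  have range_sum_le : ∀ t : Finset ℕ, ∑ i ∈ Finset.range t.card, i ≤ ∑ x ∈ t, x := by
    intro t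
    induction t using Finset.induction_on_max with
    | empty => simp
    | insert a t ha ih =>
      have hcard : t.card ≤ a := by
        simpa using Finset.card_le_card fun x hx => Finset.mem_range.2 (ha x hx)
      rw [Finset.card_insert_of_notMem fun h => lt_irrefl _ (ha a h), Finset.sum_range_succ,
        Finset.sum_insert fun h => lt_irrefl _ (ha a h)]
      omega
  calc (Fintype.card ι).choose 2
      = ∑ i ∈ Finset.range (Finset.univ.image f).card, i := by
        rw [Finset.card_image_of_injective _ hf, Finset.card_univ, Finset.sum_range_id,
          Nat.choose_two_right]
    _ ≤ ∑ x ∈ Finset.univ.image f, x := range_sum_le _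
    _ = ∑ i, f i := Finset.sum_image fun a _ b _ h => hf h

lemma pow_choose_two_dvd_det_eval {ι : Type*} [Fintype ι] [DecidableEq ι] (q : ι → O[X])
    {w : ι → O} {τ : O} (hw : ∀ i, τ ∣ w i) :
    τ ^ (Fintype.card ι).choose 2 ∣ Matrix.det (Matrix.of fun a i => (q a).eval (w i)) := by
  choose w' hw' using hw
  let J := ∑ a, (q a).natDegree + 1
  have hJ : ∀ a, (q a).natDegree < J := fun a =>
    Nat.lt_succ_of_le (Finset.single_le_sum (f := fun a => (q a).natDegree)
      (fun _ _ => Nat.zero_le _) (Finset.mem_univ a))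
  have row_eq : (Matrix.of fun a i => (q a).eval (w i)) =
      fun a => ∑ j : Fin J, ((q a).coeff j * τ ^ (j : ℕ)) • (fun i => w' i ^ (j : ℕ)) := by
    funext a i
    rw [Matrix.of_apply, eval_eq_sum_range' (hJ a), Finset.sum_apply, ← Fin.sum_univ_eq_sum_range]
    refine Finset.sum_congr rfl fun j _ => ?_
    simp only [Pi.smul_apply, smul_eq_mul, hw', mul_pow]
    ring
  -- Expanding the rows multilinearly, only the terms with pairwise distinct powers survive.
  rw [row_eq]
  change _ ∣ Matrix.detRowAlternating.toMultilinearMap _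
  rw [MultilinearMap.map_sum]
  refine Finset.dvd_sum fun r _ => ?_
  rw [MultilinearMap.map_smul_univ]
  by_cases hr : Function.Injective r
  · rw [Finset.prod_mul_distrib, Finset.prod_pow_eq_pow_sum]
    exact ((pow_dvd_pow _ (choose_two_le_sum_of_injective
      (Fin.val_injective.comp hr))).mul_left _).mul_right _
  · obtain ⟨a, b, hab, hne⟩ := Function.not_injective_iff.mp hr
    have repeated_row : Matrix.detRowAlternating.toMultilinearMap
        (fun a => fun i => w' i ^ (r a : ℕ)) = 0 :=
      Matrix.detRowAlternating.map_eq_zero_of_eq _ (by simp [hab]) hne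
    rw [repeated_row, smul_zero]
    exact dvd_zero _

lemma dvd_det_sub_det {ι : Type*} [Fintype ι] [DecidableEq ι] {M N : Matrix ι ι O} {x : O}
    (h : ∀ a i, x ∣ M a i - N a i) : x ∣ M.det - N.det := by
  rw [← Ideal.mem_span_singleton, ← Ideal.Quotient.mk_eq_mk_iff_sub_mem, RingHom.map_det,
    RingHom.map_det]
  congr 1
  ext a i
  exact (Ideal.Quotient.mk_eq_mk_iff_sub_mem _ _).mpr (Ideal.mem_span_singleton.mpr (h a i))

lemma dvd_evalEval_sub_evalEval (p : O[X][X]) {x a a' b b' : O} (ha : x ∣ a - a')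
    (hb : x ∣ b - b') : x ∣ p.evalEval a b - p.evalEval a' b' := by
  have h1 : b - b' ∣ p.evalEval a b - p.evalEval a b' := by
    simpa only [map_evalRingHom_eval] using sub_dvd_eval_sub b b' (p.map (evalRingHom a))
  have h2 : a - a' ∣ p.evalEval a b' - p.evalEval a' b' :=
    sub_dvd_eval_sub a a' (p.eval (C b'))
  simpa using (hb.trans h1).add (ha.trans h2)

lemma eval_eval_map_compRingHom (p : O[X][X]) (a b : O[X]) (u : O) :
    ((p.map (compRingHom a)).eval b).eval u = p.evalEval (a.eval u) (b.eval u) := by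
  induction p using Polynomial.induction_on' with
  | add p q hp hq => simp only [Polynomial.map_add, eval_add, hp, hq, evalEval_add]
  | monomial j a => simp [evalEval, eval_comp]

lemma evalEval_map_compRingHom_comp (p : O[X][X]) (a : O[X]) (b : O[X][X]) (u v : O) :
    ((p.map (compRingHom a)).comp b).evalEval u v = p.evalEval (a.eval u) (b.evalEval u v) := by
  rw [evalEval, eval_comp, eval_eval_map_compRingHom, evalEval]

lemma mul_sub_dvd_evalEval_sub_evalEval {P : O[X][X]} (hP : (derivative P).evalEval 0 0 = 0)
    {x u v w : O} (hu : x ∣ u) (hv : x ∣ v) (hw : x ∣ w) :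
    x * (v - w) ∣ P.evalEval u v - P.evalEval u w := by
  obtain ⟨k, hk⟩ := binomExpansion (P.map (evalRingHom u)) w (v - w)
  rw [add_sub_cancel, derivative_map] at hk
  simp only [map_evalRingHom_eval] at hk
  have hder : x ∣ (derivative P).evalEval u w := by
    simpa [hP] using dvd_evalEval_sub_evalEval (derivative P) (a' := 0) (b' := 0)
      (by simpa using hu) (by simpa using hw)
  have factored : P.evalEval u v - P.evalEval u w =
      ((derivative P).evalEval u w + k * (v - w)) * (v - w) := by
    linear_combination hk
  rw [factored]
  exact mul_dvd_mul_right (hder.add ((hv.sub hw).mul_left k)) _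

lemma exists_approx_fixedPoint (x : O) {P : O[X][X]} (hP0 : P.evalEval 0 0 = 0)
    (hP1 : (derivative P).evalEval 0 0 = 0) (l : ℕ) :
    ∃ Φ : O[X], ∀ u v : O, x ∣ u → x ∣ v → v = P.evalEval u v →
      x ^ l ∣ v - Φ.eval u ∧ x ∣ Φ.eval u := by
  induction l with
  | zero => exact ⟨0, fun u v _ _ _ => by simp⟩
  | succ l ih =>
    obtain ⟨Φ, hΦ⟩ := ih
    refine ⟨P.eval Φ, fun u v hu hv hfix => ?_⟩
    obtain ⟨happrox, hdvd⟩ := hΦ u v hu hv hfix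
    have eval_iterate : (P.eval Φ).eval u = P.evalEval u (Φ.eval u) := by
      have comp_X : compRingHom (X : O[X]) = RingHom.id _ := by ext <;> simp
      simpa [comp_X] using eval_eval_map_compRingHom P X Φ u
    rw [eval_iterate]
    constructor
    · calc x ^ (l + 1) = x * x ^ l := pow_succ' x l
        _ ∣ x * (v - Φ.eval u) := mul_dvd_mul_left x happrox
        _ ∣ P.evalEval u v - P.evalEval u (Φ.eval u) :=
          mul_sub_dvd_evalEval_sub_evalEval hP1 hu hv hdvd
        _ = v - P.evalEval u (Φ.eval u) := by rw [← hfix]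
    · simpa [hP0] using dvd_evalEval_sub_evalEval P (a' := 0) (b' := 0)
        (by simpa using hu) (by simpa using hdvd)

lemma exists_fixedPoint_form {h : O[X][X]} {t₀ y₀ δ : O} (h0 : h.evalEval t₀ y₀ = 0)
    (hδ : (derivative h).evalEval t₀ y₀ = δ) :
    ∃ P : O[X][X], P.evalEval 0 0 = 0 ∧ (derivative P).evalEval 0 0 = 0 ∧
      ∀ u v, h.evalEval (t₀ + δ ^ 2 * u) (y₀ + δ * v) = δ ^ 2 * (v - P.evalEval u v) := by
  let H := (h.map (compRingHom (X + C t₀))).comp (X + C (C y₀))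
  have hH : ∀ a b, H.evalEval a b = h.evalEval (t₀ + a) (y₀ + b) := fun a b => by
    simp [H, evalEval_map_compRingHom_comp, add_comm]
  have coeff_zero : ∀ p : O[X][X], (p.coeff 0).coeff 0 = p.evalEval 0 0 := fun p => by
    simp [evalEval, coeff_zero_eq_eval_zero]
  have hc0 : (H.coeff 0).divX * X = H.coeff 0 := by
    simpa [coeff_zero, hH, h0] using divX_mul_X_add (H.coeff 0)
  have hc1 : (H.coeff 1).divX * X + C δ = H.coeff 1 := by
    have hderiv : derivative H =
        ((derivative h).map (compRingHom (X + C t₀))).comp (X + C (C y₀)) := by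
      simp [H, derivative_comp, derivative_map]
    have : H.coeff 1 = (derivative H).coeff 0 := by simp [coeff_derivative]
    have hδ' : (H.coeff 1).coeff 0 = δ := by
      rw [this, coeff_zero, hderiv, evalEval_map_compRingHom_comp]
      simpa using hδ
    simpa [hδ'] using divX_mul_X_add (H.coeff 1)
  set K₀ := (H.coeff 0).divX
  set K₁ := (H.coeff 1).divX
  set K₂ := H.divX.divX
  have hH' : H = (K₂ * X + C (K₁ * X + C δ)) * X + C (K₀ * X) := by
    rw [hc0, hc1]
    conv_lhs => rw [← divX_mul_X_add H, ← divX_mul_X_add H.divX]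
    simp [K₂, coeff_divX]
  refine ⟨-(C (X * K₀.comp (C (δ ^ 2) * X)) + C (C δ * X * K₁.comp (C (δ ^ 2) * X)) * X +
    (K₂.map (compRingHom (C (δ ^ 2) * X))).comp (C (C δ) * X) * X ^ 2), ?_, ?_, fun u v => ?_⟩
  · simp [evalEval]
  · simp [evalEval]
  · rw [← hH, hH']
    simp only [evalEval_add, evalEval_mul, evalEval_neg, evalEval_C, evalEval_X, evalEval_pow,
      evalEval_map_compRingHom_comp, eval_add, eval_mul, eval_C, eval_X, eval_comp]
    ring

lemma pow_dvd_det_evalEval_of_roots [IsDomain O] {h : O[X][X]} {t₀ y₀ δ x : O}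
    (h0 : h.evalEval t₀ y₀ = 0) (hδ : (derivative h).evalEval t₀ y₀ = δ) (hδ0 : δ ≠ 0) {k : ℕ}
    (hk : k ≠ 0) {ι : Type*} [Fintype ι] [DecidableEq ι] {t y : ι → O}
    (ht : ∀ i, δ ^ 2 * x ^ k ∣ t i - t₀) (hy : ∀ i, δ * x ∣ y i - y₀)
    (hty : ∀ i, h.evalEval (t i) (y i) = 0) (p : ι → O[X][X]) :
    x ^ (k * (Fintype.card ι).choose 2) ∣
      (Matrix.of fun a i => (p a).evalEval (t i) (y i)).det := by
  choose u' hu' using ht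
  choose v' hv' using hy
  obtain ⟨u, hu, rfl⟩ : ∃ u : ι → O, (∀ i, x ^ k ∣ u i) ∧ t = fun i => t₀ + δ ^ 2 * u i :=
    ⟨fun i => x ^ k * u' i, fun i => dvd_mul_right _ _, funext fun i => by
      linear_combination hu' i⟩
  obtain ⟨v, hv, rfl⟩ : ∃ v : ι → O, (∀ i, x ∣ v i) ∧ y = fun i => y₀ + δ * v i :=
    ⟨fun i => x * v' i, fun i => dvd_mul_right _ _, funext fun i => by
      linear_combination hv' i⟩
  obtain ⟨P, hP0, hP1, hP⟩ := exists_fixedPoint_form h0 hδ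
  obtain ⟨Φ, hΦ⟩ := exists_approx_fixedPoint x hP0 hP1 (k * (Fintype.card ι).choose 2)
  have hfix : ∀ i, v i = P.evalEval (u i) (v i) := fun i => by
    have := (hP (u i) (v i)).symm.trans (hty i)
    exact sub_eq_zero.mp ((mul_eq_zero.mp this).resolve_left (pow_ne_zero 2 hδ0))
  let q : ι → O[X] := fun a =>
    ((p a).map (compRingHom (C t₀ + C (δ ^ 2) * X))).eval (C y₀ + C δ * Φ)
  have hq : ∀ a i, (q a).eval (u i) =
      (p a).evalEval (t₀ + δ ^ 2 * u i) (y₀ + δ * Φ.eval (u i)) := fun a i => by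
    simp [q, eval_eval_map_compRingHom]
  have hdet : x ^ (k * (Fintype.card ι).choose 2) ∣
      Matrix.det (Matrix.of fun a i => (q a).eval (u i)) := by
    rw [pow_mul]
    exact pow_choose_two_dvd_det_eval q hu
  refine (dvd_iff_dvd_of_dvd_sub (dvd_det_sub_det fun a i => ?_)).mpr hdet
  simp only [Matrix.of_apply, hq]
  refine dvd_evalEval_sub_evalEval _ (by simp) ?_
  rw [add_sub_add_left_eq_sub, ← mul_sub]
  exact (hΦ (u i) (v i) ((dvd_pow_self x hk).trans (hu i)) (hv i) (hfix i)).1.mul_left δ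

lemma card_le_natDegree_of_approx_roots [IsDomain O] [ValuationRing O] {x : O} (hx : ¬ IsUnit x)
    {c m d : ℕ} (hm : c * d < m) {p : O[X]} (hp : p.Monic)
    (hd : p.natDegree = d) (S : Finset O) (hS : ∀ y ∈ S, x ^ m ∣ p.eval y)
    (hinc : ∀ y ∈ S, ∀ z ∈ S, y ≠ z → ¬ x ^ c ∣ y - z) : S.card ≤ d := by
  classical
  induction d generalizing m p S with
  | zero =>
    have : S = ∅ := Finset.eq_empty_of_forall_notMem fun y hy => hx <| by
      have hone : p = 1 := hp.natDegree_eq_zero.mp hd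
      exact isUnit_of_dvd_one ((dvd_pow_self x (by omega : m ≠ 0)).trans
        (by simpa [hone] using hS y hy))
    simp [this]
  | succ d ih =>
    obtain rfl | ⟨y₀, hy₀⟩ := S.eq_empty_or_nonempty
    · simp
    set q := p /ₘ (X - C y₀)
    have hpq : ∀ y, p.eval y = (y - y₀) * q.eval y + p.eval y₀ := fun y => by
      conv_lhs => rw [← modByMonic_add_div p (X - C y₀)]
      simp only [eval_add, modByMonic_X_sub_C_eq_C_eval, eval_C, eval_mul, eval_sub, eval_X, q]
      ring
    have hq : ∀ y ∈ S.erase y₀, x ^ (m - c) ∣ q.eval y := fun y hy => by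
      obtain ⟨hne, hyS⟩ := Finset.mem_erase.mp hy
      have hprod : x ^ c * x ^ (m - c) ∣ (y - y₀) * q.eval y := by
        rw [← pow_add, Nat.add_sub_cancel' (by nlinarith)]
        simpa [hpq y] using (hS y hyS).sub (hS y₀ hy₀)
      obtain ⟨e, he⟩ :=
        (ValuationRing.dvd_total (x ^ c) (y - y₀)).resolve_left (hinc y hyS y₀ hy₀ hne)
      have hne0 : y - y₀ ≠ 0 := sub_ne_zero.mpr hne
      refine (mul_dvd_mul_iff_left hne0).mp (dvd_trans ?_ hprod)
      exact mul_dvd_mul_right ⟨e, he⟩ _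
    have hq_monic : q.Monic := by
      rw [Monic, leadingCoeff_divByMonic_X_sub_C _ fun h0 => ?_, hp.leadingCoeff]
      rw [natDegree_eq_of_degree_eq_some h0] at hd
      exact d.succ_ne_zero hd.symm
    have := ih (m := m - c) (p := q) (by rw [mul_add] at hm; omega)
      hq_monic (by rw [natDegree_divByMonic _ (monic_X_sub_C y₀)]; simp [hd])
      (S.erase y₀) hq fun y hy z hz =>
        hinc y (Finset.mem_of_mem_erase hy) z (Finset.mem_of_mem_erase hz)
    rw [Finset.card_erase_of_mem hy₀] at this
    omega

lemma card_le_mul_natDegree_of_approx_roots [IsDomain O] [ValuationRing O] {x : O}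
    (hx : ¬ IsUnit x) {p : O[X]} (hp : p.Monic) {c m : ℕ} (hm : c * p.natDegree < m) {α : Type*}
    {S : Finset α} {f : α → O} (hS : ∀ s ∈ S, x ^ m ∣ p.eval (f s)) {B : ℕ}
    (hB : ∀ s₀ ∈ S, ∀ U ⊆ S, (∀ s ∈ U, x ^ c ∣ f s - f s₀) → U.card ≤ B) :
    S.card ≤ B * p.natDegree := by
  classical
  let cl : α → O ⧸ Ideal.span {x ^ c} := fun s => Ideal.Quotient.mk _ (f s)
  have cl_eq_iff : ∀ s s', cl s = cl s' ↔ x ^ c ∣ f s - f s' := fun s s' => by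
    rw [← Ideal.mem_span_singleton, ← Ideal.Quotient.mk_eq_mk_iff_sub_mem]
  refine (Finset.card_le_mul_card_image (f := cl) S B fun v hv => ?_).trans
    (Nat.mul_le_mul_left _ ?_)
  · obtain ⟨s₀, hs₀, rfl⟩ := Finset.mem_image.mp hv
    exact hB s₀ hs₀ _ (Finset.filter_subset _ _) fun s hs =>
      (cl_eq_iff s s₀).mp (Finset.mem_filter.mp hs).2
  · obtain ⟨U, hUS, hinj, himage⟩ := Finset.exists_subset_injOn_image_eq_of_surjOn (f := cl)
      (S : Set α) (S.image cl) (by rw [Finset.coe_image]; exact Set.surjOn_image _ _)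
    have hf_inj : Set.InjOn f U := fun s hs s' hs' h =>
      hinj hs hs' (congrArg (Ideal.Quotient.mk _) h)
    rw [← himage, Finset.card_image_of_injOn hinj, ← Finset.card_image_of_injOn hf_inj]
    refine card_le_natDegree_of_approx_roots hx hm hp rfl (U.image f) ?_ ?_
    · simpa using fun s hs => hS s (hUS hs)
    · simp only [Finset.mem_image, forall_exists_index, and_imp]
      rintro _ s hs rfl _ s' hs' rfl hne hdvd
      exact hne (congrArg f (hinj hs hs' ((cl_eq_iff s s').mpr hdvd)))

end DeterminantMethod

section PolynomialBounds

open Polynomial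

lemma natDegree_det_le_sum {A : Type*} [CommRing A] {n : Type*} [Fintype n] [DecidableEq n]
    (M : Matrix n n A[X]) (w : n → ℕ) (hM : ∀ a i, (M a i).natDegree ≤ w a) :
    M.det.natDegree ≤ ∑ a, w a := by
  rw [← Matrix.det_transpose, Matrix.det_apply']
  refine natDegree_sum_le_of_forall_le _ _ fun σ _ => natDegree_mul_le.trans ?_
  rw [natDegree_intCast, zero_add]
  exact (natDegree_prod_le _ _).trans (Finset.sum_le_sum fun i _ => hM _ _)

lemma exists_forall_natDegree_coeff_le {A : Type*} [CommRing A] (p : A[X][X]) :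
    ∃ M, ∀ b, (p.coeff b).natDegree ≤ M := by
  refine ⟨p.support.sup fun b => (p.coeff b).natDegree, fun b => ?_⟩
  by_cases hb : b ∈ p.support
  · exact Finset.le_sup (f := fun b => (p.coeff b).natDegree) hb
  · simp [notMem_support_iff.mp hb]

lemma natDegree_le_of_monic_of_eval_eq_zero {A : Type*} [CommRing A] [IsDomain A] {p : A[X][X]}
    (hp : p.Monic) {M : ℕ} (hM : ∀ b, (p.coeff b).natDegree ≤ M) {y : A[X]}
    (hy : p.eval y = 0) : y.natDegree ≤ M := by
  obtain ⟨k, hk⟩ : ∃ k, p.natDegree = k + 1 := Nat.exists_eq_succ_of_ne_zero fun h0 => by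
    simp [hp.natDegree_eq_zero.mp h0] at hy
  have top_eq : y ^ (k + 1) = -∑ i ∈ Finset.range (k + 1), p.coeff i * y ^ i := by
    rw [hp.as_sum, hk] at hy
    simp only [eval_add, eval_pow, eval_X, eval_finsetSum, eval_mul, eval_C] at hy
    exact eq_neg_of_add_eq_zero_left hy
  have top_le : (y ^ (k + 1)).natDegree ≤ M + k * y.natDegree := by
    rw [top_eq, natDegree_neg]
    refine natDegree_sum_le_of_forall_le _ _ fun i hi => ?_
    refine natDegree_mul_le.trans (add_le_add (hM i) (natDegree_pow_le.trans ?_))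
    exact Nat.mul_le_mul_right _ (Nat.lt_succ_iff.mp (Finset.mem_range.mp hi))
  rw [natDegree_pow, add_mul, one_mul] at top_le
  omega

lemma exists_natDegree_map_eval_le {R A : Type*} [CommRing R] [CommRing A] (ι : R →+* A[X])
    (p : R[X]) : ∃ M, ∀ t W, 1 ≤ W → (ι t).natDegree ≤ W → (ι (p.eval t)).natDegree ≤ M * W := by
  induction p using Polynomial.induction_on' with
  | add p q hp hq =>
    obtain ⟨M, hM⟩ := hp
    obtain ⟨M', hM'⟩ := hq
    refine ⟨M + M', fun t W hW ht => ?_⟩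
    rw [eval_add, map_add, add_mul]
    have := hM t W hW ht
    have := hM' t W hW ht
    exact (natDegree_add_le _ _).trans (by omega)
  | monomial j a =>
    refine ⟨(ι a).natDegree + j, fun t W hW ht => ?_⟩
    rw [eval_monomial, map_mul, map_pow, add_mul]
    exact natDegree_mul_le.trans (add_le_add (Nat.le_mul_of_pos_right _ hW)
      (natDegree_pow_le.trans (Nat.mul_le_mul_left _ ht)))

lemma exists_natDegree_root_le {R A : Type*} [CommRing R] [CommRing A] [IsDomain A]
    (ι : R →+* A[X]) {h : R[X][X]} (hmon : h.Monic) :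
    ∃ μ, ∀ t y W, 1 ≤ W → (ι t).natDegree ≤ W → h.evalEval t y = 0 →
      (ι y).natDegree ≤ μ * W := by
  choose M hM using fun b => exists_natDegree_map_eval_le ι (h.coeff b)
  refine ⟨∑ b ∈ h.support, M b, fun t y W hW ht h0 => ?_⟩
  refine natDegree_le_of_monic_of_eval_eq_zero (p := (h.map (evalRingHom t)).map ι)
    ((hmon.map _).map _) (fun b => ?_) ?_
  · rw [coeff_map, coeff_map, coe_evalRingHom]
    by_cases hb : b ∈ h.support
    · exact (hM b t W hW ht).trans (Nat.mul_le_mul_right _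
        (Finset.single_le_sum (f := M) (fun _ _ => Nat.zero_le _) hb))
    · simp [notMem_support_iff.mp hb]
  · rw [eval_map, eval₂_hom, eval_map, eval₂_evalRingHom, h0, map_zero]

lemma X_pow_dvd_coe_powerSeries_iff {A : Type*} [CommRing A] (p : A[X]) (n : ℕ) :
    (PowerSeries.X : PowerSeries A) ^ n ∣ (p : PowerSeries A) ↔ X ^ n ∣ p := by
  rw [PowerSeries.X_pow_dvd_iff, X_pow_dvd_iff]
  simp only [coeff_coe]

end PolynomialBounds

section Elimination

open Polynomial

lemma exists_linear_relation_fin {R : Type*} [CommRing R] [Nontrivial R] {α : Type*} (S : Set α)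
    {s : ℕ} (p : Fin s → α → R)
    (hdet : ∀ u : Fin s → α, (∀ i, u i ∈ S) → (Matrix.of fun a i => p a (u i)).det = 0) :
    ∃ g : Fin s → R, g ≠ 0 ∧ ∀ x ∈ S, ∑ a, g a * p a x = 0 := by
  induction s with
  | zero => exact absurd (hdet Fin.elim0 fun i => i.elim0) (by simp)
  | succ s ih =>
    by_cases hminor : ∀ u : Fin s → α, (∀ i, u i ∈ S) →
        (Matrix.of fun a i => p a.succ (u i)).det = 0
    · obtain ⟨g, hg0, hg⟩ := ih (fun a => p a.succ) hminor
      refine ⟨Fin.cons 0 g, fun h0 => hg0 (funext fun a => ?_), fun x hx => ?_⟩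
      · simpa using congrFun h0 a.succ
      · simpa [Fin.sum_univ_succ] using hg x hx
    · push Not at hminor
      obtain ⟨u, huS, hu⟩ := hminor
      -- the coefficients are the cofactors along the column of the variable point
      refine ⟨fun a => (-1) ^ (a : ℕ) * (Matrix.of fun b i => p (a.succAbove b) (u i)).det,
        fun h0 => hu (by simpa using congrFun h0 0), fun x hx => ?_⟩
      have := hdet (Fin.cons x u) fun i => Fin.cases hx huS i
      rw [Matrix.det_succ_column_zero] at this
      refine (Finset.sum_congr rfl fun a _ => ?_).trans this
      have hsub : (Matrix.of fun a i => p a ((Fin.cons x u : Fin (s + 1) → α) i)).submatrix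
          a.succAbove Fin.succ = Matrix.of fun b i => p (a.succAbove b) (u i) := by
        ext; simp
      rw [hsub, Matrix.of_apply, Fin.cons_zero]
      ring

lemma exists_linear_relation {R : Type*} [CommRing R] [Nontrivial R] {α κ : Type*} [Fintype κ]
    [DecidableEq κ] (S : Set α) (p : κ → α → R)
    (hdet : ∀ u : κ → α, (∀ i, u i ∈ S) → (Matrix.of fun a i => p a (u i)).det = 0) :
    ∃ g : κ → R, g ≠ 0 ∧ ∀ x ∈ S, ∑ a, g a * p a x = 0 := by
  let e := Fintype.equivFin κ
  obtain ⟨g, hg0, hg⟩ := exists_linear_relation_fin S (fun a => p (e.symm a)) fun u hu => by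
    rw [← hdet (u ∘ e) fun i => hu (e i), ← Matrix.det_submatrix_equiv_self e]
    congr 1
    ext
    simp
  refine ⟨g ∘ e, fun h0 => hg0 (funext fun a => ?_), fun x hx => ?_⟩
  · simpa using congrFun h0 (e.symm a)
  · rw [← hg x hx, ← e.sum_comp]
    simp

lemma resultant_ne_zero_of_irreducible {A : Type*} [CommRing A] [IsDomain A]
    [IsIntegrallyClosed A] {h g : A[X]} (hm : h.Monic) (hirr : Irreducible h) (hg : g ≠ 0)
    (hgh : g.natDegree < h.natDegree) : resultant h g ≠ 0 := by
  let K := FractionRing A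
  have hinj : Function.Injective (algebraMap A K) := IsFractionRing.injective _ K
  have hcop : IsCoprime (h.map (algebraMap A K)) (g.map (algebraMap A K)) := by
    rw [((hm.irreducible_iff_irreducible_map_fraction_map).mp hirr).coprime_iff_not_dvd]
    intro hdvd
    have hle := natDegree_le_of_dvd hdvd ((Polynomial.map_ne_zero_iff hinj).mpr hg)
    rw [natDegree_map_eq_of_injective hinj, natDegree_map_eq_of_injective hinj] at hle
    exact hle.not_gt hgh
  have hres := resultant_ne_zero _ _ hcop
  rw [natDegree_map_eq_of_injective hinj, natDegree_map_eq_of_injective hinj,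
    resultant_map_map] at hres
  exact fun h0 => hres (by rw [h0, map_zero])

lemma natDegree_resultant_le {A : Type*} [CommRing A] {h g : A[X][X]} {M : ℕ}
    (hh : ∀ b, (h.coeff b).natDegree ≤ M) (hg : ∀ b, (g.coeff b).natDegree ≤ M) :
    (resultant h g).natDegree ≤ (h.natDegree + g.natDegree) * M := by
  rw [resultant]
  refine (natDegree_det_le_sum _ (fun _ => M) fun a i => ?_).trans ?_
  · unfold sylvester
    simp only [Matrix.of_apply]
    induction i using Fin.addCases with
    | left i =>
      simp only [Fin.addCases_left]
      split_ifs
      exacts [hg _, by simp]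
    | right i =>
      simp only [Fin.addCases_right]
      split_ifs
      exacts [hh _, by simp]
  · simp

lemma exists_card_common_zeros_le {R : Type*} [CommRing R] [IsDomain R] [IsIntegrallyClosed R[X]]
    {h : R[X][X]} (hm : h.Monic) (hirr : Irreducible h) (A : ℕ) :
    ∃ B : ℕ, ∀ g : R[X][X], g ≠ 0 → g.natDegree < h.natDegree →
      (∀ b, (g.coeff b).natDegree ≤ A) →
      ∀ S : Finset R, (∀ t ∈ S, ∃ y, h.evalEval t y = 0 ∧ g.evalEval t y = 0) → S.card ≤ B := by
  classical
  obtain ⟨M, hM⟩ := exists_forall_natDegree_coeff_le h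
  refine ⟨(h.natDegree + h.natDegree) * (M + A), fun g hg0 hgd hgA S hS => ?_⟩
  obtain ⟨a, b, -, -, hab⟩ := exists_mul_add_mul_eq_C_resultant h g le_rfl le_rfl (by omega)
  have hr0 := resultant_ne_zero_of_irreducible hm hirr hg0 hgd
  have hroot : S ⊆ (resultant h g).roots.toFinset := fun t ht => by
    obtain ⟨y, hhy, hgy⟩ := hS t ht
    rw [Multiset.mem_toFinset, mem_roots hr0, IsRoot.def]
    have := congrArg (evalEval t y) hab
    rw [evalEval_add, evalEval_mul, evalEval_mul, hhy, hgy, evalEval_C] at this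
    simpa using this.symm
  calc S.card ≤ (resultant h g).roots.toFinset.card := Finset.card_le_card hroot
    _ ≤ (resultant h g).natDegree := (Multiset.toFinset_card_le _).trans (card_roots' _)
    _ ≤ (h.natDegree + g.natDegree) * (M + A) := natDegree_resultant_le
        (fun b => (hM b).trans (Nat.le_add_right _ _))
        (fun b => (hgA b).trans (Nat.le_add_left _ _))
    _ ≤ _ := Nat.mul_le_mul_right _ (by omega)

end Elimination

section Sparse

/-- A property of natural numbers is sparse if, for some bound `K`, any window of given length that
starts late enough contains at most `K` numbers with this property. -/
def IsSparse (P : ℕ → Prop) : Prop :=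
  ∃ K, ∀ w, ∃ N₀, ∀ N ≥ N₀, ∀ I ⊆ Finset.range w, (∀ i ∈ I, P (N + i)) → I.card ≤ K

lemma IsSparse.or {P Q : ℕ → Prop} (hP : IsSparse P) (hQ : IsSparse Q) :
    IsSparse fun n => P n ∨ Q n := by
  classical
  obtain ⟨K, hK⟩ := hP
  obtain ⟨K', hK'⟩ := hQ
  refine ⟨K + K', fun w => ?_⟩
  obtain ⟨N₀, hN₀⟩ := hK w
  obtain ⟨N₁, hN₁⟩ := hK' w
  refine ⟨max N₀ N₁, fun N hN I hI hPQ => ?_⟩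
  rw [← Finset.card_filter_add_card_filter_not (s := I) fun i => P (N + i)]
  refine add_le_add (hN₀ N (le_of_max_le_left hN) _ ((Finset.filter_subset _ _).trans hI) ?_)
    (hN₁ N (le_of_max_le_right hN) _ ((Finset.filter_subset _ _).trans hI) ?_)
  · simp
  · simpa using fun i hi hPi => (hPQ i hi).resolve_left hPi

lemma IsSparse.mono {P Q : ℕ → Prop} (hQ : IsSparse Q) (h : ∀ n, P n → Q n) : IsSparse P := by
  obtain ⟨K, hK⟩ := hQ
  refine ⟨K, fun w => (hK w).imp fun N₀ hN₀ N hN I hI hP => ?_⟩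
  exact hN₀ N hN I hI fun i hi => h _ (hP i hi)

lemma isSparse_of_finite {P : ℕ → Prop} (hP : {n | P n}.Finite) : IsSparse P := by
  refine ⟨hP.toFinset.card, fun w => ⟨0, fun N _ I _ hI => ?_⟩⟩
  exact Finset.card_le_card_of_injOn (N + ·) (fun i hi => by simpa using hI i hi)
    (add_right_injective N).injOn

lemma isSparse_exists_mem_finset {α : Type*} (H : Finset α) {P : α → ℕ → Prop}
    (hP : ∀ h ∈ H, IsSparse (P h)) : IsSparse fun n => ∃ h ∈ H, P h n := by
  classical
  induction H using Finset.induction_on with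
  | empty => exact isSparse_of_finite (by simp)
  | insert h H _ ih =>
    simp only [Finset.exists_mem_insert]
    exact (hP h (Finset.mem_insert_self h H)).or
      (ih fun h' hh' => hP h' (Finset.mem_insert_of_mem hh'))

lemma IsSparse.exists_not {P : ℕ → Prop} (hP : IsSparse P) : ∃ n, ¬ P n := by
  by_contra! hall
  obtain ⟨K, hK⟩ := hP
  obtain ⟨N₀, hN₀⟩ := hK (K + 1)
  have := hN₀ N₀ le_rfl _ subset_rfl fun i _ => hall _
  rw [Finset.card_range] at this
  omega

end Sparse

section CountingRoots

open Polynomial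

lemma sum_weights_lt {d μ k W : ℕ} (hd : 0 < d) (h : W * (μ * d) < k * (μ * d + (d - 1))) :
    ∑ a : Fin (μ + 1) × Fin d, ((a.1 : ℕ) * W + a.2 * (μ * W)) <
      k * (Fintype.card (Fin (μ + 1) × Fin d)).choose 2 := by
  have gauss : ∀ n : ℕ, (∑ i : Fin n, (i : ℕ)) * 2 = n * (n - 1) := fun n => by
    rw [Fin.sum_univ_eq_sum_range (fun i => i), Finset.sum_range_id_mul_two]
  have hsum : (∑ a : Fin (μ + 1) × Fin d, ((a.1 : ℕ) * W + a.2 * (μ * W))) * 2 =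
      (μ + 1) * d * (W * (μ * d)) := by
    have split_sum : ∑ a : Fin (μ + 1) × Fin d, ((a.1 : ℕ) * W + a.2 * (μ * W)) =
        d * ((∑ i : Fin (μ + 1), (i : ℕ)) * W) + (μ + 1) * ((∑ i : Fin d, (i : ℕ)) * (μ * W)) := by
      rw [Fintype.sum_prod_type]
      simp only [Finset.sum_add_distrib, Finset.sum_const, Finset.card_univ, Fintype.card_fin,
        smul_eq_mul, ← Finset.sum_mul, ← Finset.mul_sum]
    obtain ⟨e, rfl⟩ : ∃ e, d = e + 1 := ⟨d - 1, by omega⟩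
    have h1 := gauss (μ + 1)
    have h2 := gauss (e + 1)
    simp only [Nat.add_sub_cancel] at h1 h2
    rw [split_sum]
    linear_combination (e + 1) * W * h1 + (μ + 1) * (μ * W) * h2
  have hcard : (μ + 1) * d - 1 = μ * d + (d - 1) := by rw [add_mul]; omega
  refine Nat.lt_of_mul_lt_mul_right (a := 2) ?_
  rw [hsum, Fintype.card_prod, Fintype.card_fin, Fintype.card_fin, Nat.choose_two_right,
    mul_assoc k, Nat.div_mul_cancel (Nat.even_mul_pred_self _).two_dvd, hcard, mul_left_comm k]
  exact Nat.mul_lt_mul_of_pos_left h (by positivity)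

variable {R F : Type*} [CommRing R] [Field F] {ι : R →+* F[X]} {φ : R →+* PowerSeries F}

lemma det_evalEval_eq_zero_of_roots (hι : Function.Injective ι)
    (hφ : ∀ r, φ r = ι r) {h : R[X][X]} {t₀ y₀ : R} (h0 : h.evalEval t₀ y₀ = 0)
    {δ : PowerSeries F} (hδ : φ ((derivative h).evalEval t₀ y₀) = δ) (hδ0 : δ ≠ 0) {k : ℕ}
    (hk : k ≠ 0) {κ : Type*} [Fintype κ] [DecidableEq κ] {t y : κ → R}
    (ht : ∀ i, δ ^ 2 * PowerSeries.X ^ k ∣ φ (t i) - φ t₀)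
    (hy : ∀ i, δ * PowerSeries.X ∣ φ (y i) - φ y₀) (hty : ∀ i, h.evalEval (t i) (y i) = 0)
    {p : κ → R[X][X]} {w : κ → ℕ}
    (hw : ∀ a i, (ι ((p a).evalEval (t i) (y i))).natDegree ≤ w a)
    (hlt : ∑ a, w a < k * (Fintype.card κ).choose 2) :
    (Matrix.of fun a i => (p a).evalEval (t i) (y i)).det = 0 := by
  have hdvd : PowerSeries.X ^ (k * (Fintype.card κ).choose 2) ∣
      φ (Matrix.of fun a i => (p a).evalEval (t i) (y i)).det := by
    rw [RingHom.map_det]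
    convert pow_dvd_det_evalEval_of_roots (h := h.map (mapRingHom φ)) (t₀ := φ t₀) (y₀ := φ y₀)
      (t := φ ∘ t) (y := φ ∘ y) ?_ ?_ hδ0 hk ht hy ?_ (fun a => (p a).map (mapRingHom φ)) using 2
    · ext1 a i
      simp [map_mapRingHom_evalEval]
    · rw [map_mapRingHom_evalEval, h0, map_zero]
    · rw [derivative_map, map_mapRingHom_evalEval, hδ]
    · exact fun i => by simp [map_mapRingHom_evalEval, hty]
  rw [hφ, X_pow_dvd_coe_powerSeries_iff] at hdvd
  refine hι ((eq_zero_of_dvd_of_natDegree_lt hdvd ?_).trans (map_zero ι).symm)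
  rw [natDegree_X_pow, RingHom.map_det]
  exact (natDegree_det_le_sum _ w fun a i => hw a i).trans_lt hlt

lemma exists_polynomial_evalEval_eq_sum {μ d : ℕ} (hd : 0 < d) {γ : Fin (μ + 1) × Fin d → R}
    (hγ : γ ≠ 0) : ∃ g : R[X][X], g ≠ 0 ∧ g.natDegree < d ∧ (∀ b, (g.coeff b).natDegree ≤ μ) ∧
      ∀ x y, g.evalEval x y =
        ∑ a, γ a * (monomial a.2 (monomial a.1 (1 : R))).evalEval x y := by
  refine ⟨∑ a, monomial a.2 (monomial a.1 (γ a)), fun hg0 => hγ (funext fun a => ?_), ?_,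
    fun b => ?_, fun x y => ?_⟩
  · have := congrArg (fun g => (g.coeff a.2).coeff a.1) hg0
    simp only [finsetSum_coeff, coeff_monomial, coeff_zero] at this
    rw [Finset.sum_eq_single a] at this
    · simpa using this
    · intro b _ hb
      split_ifs with h2
      · exact coeff_monomial_of_ne _ fun h1 => hb (Prod.ext (Fin.ext h1.symm) (Fin.ext h2))
      · simp
    · simp
  · refine Nat.lt_of_le_sub_one hd (natDegree_sum_le_of_forall_le _ _ fun a _ => ?_)
    exact (natDegree_monomial_le _).trans (Nat.le_sub_one_of_lt a.2.2)
  · rw [finsetSum_coeff]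
    refine natDegree_sum_le_of_forall_le _ _ fun a _ => ?_
    rw [coeff_monomial]
    split_ifs
    · exact (natDegree_monomial_le _).trans (Nat.lt_succ_iff.mp a.1.2)
    · simp
  · simp only [evalEval, eval_finsetSum, eval_monomial, eval_mul, eval_pow, eval_C]
    exact Finset.sum_congr rfl fun a _ => by ring

lemma exists_vanishing_polynomial_of_roots [IsDomain R] (hι : Function.Injective ι)
    (hφ : ∀ r, φ r = ι r) {h : R[X][X]} {t₀ y₀ : R} (h0 : h.evalEval t₀ y₀ = 0)
    {δ : PowerSeries F} (hδ : φ ((derivative h).evalEval t₀ y₀) = δ) (hδ0 : δ ≠ 0)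
    {d μ k W : ℕ} (hd : 0 < d) (hk : W * (μ * d) < k * (μ * d + (d - 1))) {S : Set (R × R)}
    (hS : ∀ z ∈ S, h.evalEval z.1 z.2 = 0 ∧ δ ^ 2 * PowerSeries.X ^ k ∣ φ z.1 - φ t₀ ∧
      δ * PowerSeries.X ∣ φ z.2 - φ y₀)
    (hdeg : ∀ z ∈ S, (ι z.1).natDegree ≤ W ∧ (ι z.2).natDegree ≤ μ * W) :
    ∃ g : R[X][X], g ≠ 0 ∧ g.natDegree < d ∧ (∀ b, (g.coeff b).natDegree ≤ μ) ∧
      ∀ z ∈ S, g.evalEval z.1 z.2 = 0 := by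
  have hk0 : k ≠ 0 := by
    rintro rfl
    simp at hk
  obtain ⟨γ, hγ0, hγ⟩ := exists_linear_relation S
    (fun (a : Fin (μ + 1) × Fin d) z => (monomial a.2 (monomial a.1 (1 : R))).evalEval z.1 z.2)
    fun u hu => by
      refine det_evalEval_eq_zero_of_roots hι hφ h0 hδ hδ0 hk0 (fun i => (hS _ (hu i)).2.1)
        (fun i => (hS _ (hu i)).2.2) (fun i => (hS _ (hu i)).1)
        (w := fun a => a.1 * W + a.2 * (μ * W)) (fun a i => ?_) (sum_weights_lt hd hk)
      have hmon : (monomial a.2 (monomial a.1 (1 : R))).evalEval (u i).1 (u i).2 =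
          (u i).1 ^ (a.1 : ℕ) * (u i).2 ^ (a.2 : ℕ) := by
        simp [evalEval, eval_monomial]
      rw [hmon, map_mul, map_pow, map_pow]
      exact natDegree_mul_le.trans (add_le_add
        (natDegree_pow_le.trans (Nat.mul_le_mul_left _ (hdeg _ (hu i)).1))
        (natDegree_pow_le.trans (Nat.mul_le_mul_left _ (hdeg _ (hu i)).2)))
  obtain ⟨g, hg0, hgd, hgμ, hg⟩ := exists_polynomial_evalEval_eq_sum hd hγ0
  exact ⟨g, hg0, hgd, hgμ, fun z hz => (hg z.1 z.2).trans (hγ z hz)⟩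

lemma X_mul_dvd_X_pow_of_not_X_pow_dvd {x : PowerSeries F} {c : ℕ}
    (hx : ¬ PowerSeries.X ^ c ∣ x) : x * PowerSeries.X ∣ PowerSeries.X ^ c := by
  induction c generalizing x with
  | zero => simp at hx
  | succ c ih =>
    rw [pow_succ]
    by_cases hX : PowerSeries.X ∣ x
    · obtain ⟨x, rfl⟩ := hX
      rw [mul_comm PowerSeries.X x]
      refine mul_dvd_mul_right (ih fun hc => hx ?_) _
      rw [pow_succ']
      exact mul_dvd_mul_left _ hc
    · have hunit : IsUnit x := by
        rw [PowerSeries.isUnit_iff_constantCoeff, isUnit_iff_ne_zero]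
        rwa [PowerSeries.X_dvd_iff] at hX
      exact mul_dvd_mul_right (hunit.dvd) _

lemma card_roots_le [IsDomain R] (hι : Function.Injective ι) (hφ : ∀ r, φ r = ι r)
    {h : R[X][X]} (hmon : h.Monic) {μ B c k W : ℕ}
    (hB : ∀ g : R[X][X], g ≠ 0 → g.natDegree < h.natDegree → (∀ b, (g.coeff b).natDegree ≤ μ) →
      ∀ S : Finset R, (∀ t ∈ S, ∃ y, h.evalEval t y = 0 ∧ g.evalEval t y = 0) → S.card ≤ B)
    (hd : 0 < h.natDegree)
    (hk : W * (μ * h.natDegree) < k * (μ * h.natDegree + (h.natDegree - 1)))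
    (hck : c * h.natDegree < 2 * c + k) {S : Finset R} {y : R → R}
    (hy : ∀ t ∈ S, h.evalEval t (y t) = 0)
    (hdeg : ∀ t ∈ S, (ι t).natDegree ≤ W ∧ (ι (y t)).natDegree ≤ μ * W)
    (hδ : ∀ t ∈ S, ¬ PowerSeries.X ^ c ∣ φ ((derivative h).evalEval t (y t)))
    (hclose : ∀ t ∈ S, ∀ t' ∈ S, PowerSeries.X ^ (2 * c + k) ∣ φ t - φ t') :
    S.card ≤ B * h.natDegree := by
  obtain rfl | ⟨x₀, hx₀⟩ := S.eq_empty_or_nonempty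
  · simp
  have hmon' := (hmon.map (mapRingHom φ)).map (evalRingHom (φ x₀))
  have hdeg' : ((h.map (mapRingHom φ)).map (evalRingHom (φ x₀))).natDegree = h.natDegree := by
    rw [(hmon.map _).natDegree_map, hmon.natDegree_map]
  rw [← hdeg']
  refine card_le_mul_natDegree_of_approx_roots PowerSeries.X_prime.not_isUnit hmon'
    (c := c) (m := 2 * c + k) (by rwa [hdeg']) (f := fun t => φ (y t)) (fun t ht => ?_)
    fun t₀ ht₀ U hU hclass => ?_
  · have := dvd_evalEval_sub_evalEval (h.map (mapRingHom φ)) (b := φ (y t)) (b' := φ (y t))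
      (hclose x₀ hx₀ t ht) (by simp)
    rwa [map_mapRingHom_evalEval φ h t, hy t ht, map_zero, sub_zero,
      ← map_evalRingHom_eval] at this
  · set δ := φ ((derivative h).evalEval t₀ (y t₀)) with hδ_def
    have hδX : δ * PowerSeries.X ∣ PowerSeries.X ^ c := X_mul_dvd_X_pow_of_not_X_pow_dvd (hδ t₀ ht₀)
    have hδ0 : δ ≠ 0 := fun h0 => hδ t₀ ht₀ (by simp [← hδ_def, h0])
    have hδk : δ ^ 2 * PowerSeries.X ^ k ∣ PowerSeries.X ^ (2 * c + k) := by
      rw [pow_add, mul_comm 2 c, pow_mul]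
      exact mul_dvd_mul_right (pow_dvd_pow_of_dvd ((dvd_mul_right _ _).trans hδX) 2) _
    obtain ⟨g, hg0, hgd, hgμ, hg⟩ := exists_vanishing_polynomial_of_roots hι hφ (hy t₀ ht₀)
      hδ_def.symm hδ0 hd hk (S := (fun t => (t, y t)) '' (U : Set R))
      (by
        rintro _ ⟨t, ht, rfl⟩
        exact ⟨hy t (hU ht), hδk.trans (hclose t (hU ht) t₀ ht₀), hδX.trans (hclass t ht)⟩)
      (by
        rintro _ ⟨t, ht, rfl⟩
        exact hdeg t (hU ht))
    exact hB g hg0 hgd hgμ U fun t ht => ⟨y t, hy t (hU ht), hg _ ⟨t, ht, rfl⟩⟩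

lemma exists_not_X_pow_dvd_of_ne_zero (hι : Function.Injective ι) (hφ : ∀ r, φ r = ι r) {r : R}
    (hr : r ≠ 0) : ∃ c, ¬ PowerSeries.X ^ c ∣ φ r := by
  refine ⟨(ι r).natDegree + 1, fun hdvd => hr (hι ?_)⟩
  rw [hφ, X_pow_dvd_coe_powerSeries_iff] at hdvd
  rw [map_zero]
  exact eq_zero_of_dvd_of_natDegree_lt hdvd (by simp)

lemma not_dvd_map_evalEval_derivative {O : Type*} [CommRing O] {ψ : R →+* O} {h : R[X][X]}
    {Δ : R[X]} (hΔ : ∃ a b, a * h + b * derivative h = C Δ) {x : O} {t₀ t y : R}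
    (hx : ¬ x ∣ ψ (Δ.eval t₀)) (ht : x ∣ ψ t - ψ t₀) (hy : h.evalEval t y = 0) :
    ¬ x ∣ ψ ((derivative h).evalEval t y) := by
  obtain ⟨a, b, hab⟩ := hΔ
  have hΔt : Δ.eval t = b.evalEval t y * (derivative h).evalEval t y := by
    simpa [evalEval_add, evalEval_mul, evalEval_C, hy] using (congrArg (evalEval t y) hab).symm
  have hsub : x ∣ ψ (Δ.eval t) - ψ (Δ.eval t₀) := by
    rw [← map_sub] at ht ⊢
    exact ht.trans (map_dvd ψ (sub_dvd_eval_sub _ _ _))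
  refine fun hdvd => hx ((dvd_iff_dvd_of_dvd_sub hsub).mp ?_)
  rw [hΔt, map_mul]
  exact hdvd.mul_left _

lemma isSparse_exists_root_of_irreducible [IsDomain R] [IsIntegrallyClosed R[X]]
    (hι : Function.Injective ι) {τ : R} (hτ : ι τ = X) {h : R[X][X]} (hmon : h.Monic)
    (hirr : Irreducible h) (hd : 2 ≤ h.natDegree) {Δ : R[X]}
    (hΔ : ∃ a b, a * h + b * derivative h = C Δ) {x₀ : R} (hx₀ : Δ.eval x₀ ≠ 0) :
    IsSparse fun n => ∃ y, h.evalEval (x₀ + τ ^ n) y = 0 := by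
  classical
  let φ : R →+* PowerSeries F := coeToPowerSeries.ringHom.comp ι
  have hφτ : φ τ = PowerSeries.X := by simp [φ, hτ]
  obtain ⟨μ, hμ⟩ := exists_natDegree_root_le ι hmon
  obtain ⟨B, hB⟩ := exists_card_common_zeros_le hmon hirr μ
  obtain ⟨c, hc⟩ := exists_not_X_pow_dvd_of_ne_zero (φ := φ) hι (fun _ => rfl) hx₀
  set d := h.natDegree
  refine ⟨B * d, fun w => ⟨2 * c + (2 * c + w) * (μ * d) + c * d + (ι x₀).natDegree + 1,
    fun N hN I hI hroot => ?_⟩⟩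
  obtain ⟨k, rfl⟩ : ∃ k, N = 2 * c + k := ⟨N - 2 * c, by omega⟩
  let t : ℕ → R := fun i => x₀ + τ ^ (2 * c + k + i)
  have ht_inj : Set.InjOn t I := fun i _ j _ hij => by
    have := congrArg (fun r => (ι r).natDegree) (add_left_cancel hij)
    simpa [hτ] using this
  rw [← Finset.card_image_of_injOn ht_inj]
  have hroot' : ∀ s ∈ I.image t, ∃ y, h.evalEval s y = 0 := by simpa [t] using hroot
  choose! y hy using hroot'
  have hnear : ∀ i, PowerSeries.X ^ (2 * c + k) ∣ φ (t i) - φ x₀ := fun i => by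
    simp [t, hφτ, pow_add]
  have ht_deg : ∀ i ∈ I, (ι (t i)).natDegree ≤ 2 * c + k + w := fun i hi => by
    have := Finset.mem_range.mp (hI hi)
    simp only [t, map_add, map_pow, hτ]
    refine (natDegree_add_le _ _).trans (max_le ?_ ?_)
    · omega
    · rw [natDegree_X_pow]; omega
  refine card_roots_le (c := c) (k := k) (W := 2 * c + k + w) hι (φ := φ) (fun _ => rfl) hmon hB
    (by omega) ?_ ?_ (y := y) hy ?_ ?_ ?_
  · change _ < k * (μ * d + (d - 1))
    have hk : (2 * c + w) * (μ * d) < k := by omega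
    obtain ⟨e, he⟩ : ∃ e, d - 1 = e + 1 := ⟨d - 2, by omega⟩
    change (2 * c + k + w) * (μ * d) < _
    rw [he]
    nlinarith
  · change c * d < _
    omega
  · intro s hs
    obtain ⟨i, hi, rfl⟩ := Finset.mem_image.mp hs
    exact ⟨ht_deg i hi, hμ _ _ _ (by omega) (ht_deg i hi) (hy _ hs)⟩
  · intro s hs hdvd
    obtain ⟨i, -, rfl⟩ := Finset.mem_image.mp hs
    exact not_dvd_map_evalEval_derivative hΔ hc ((pow_dvd_pow _ (by omega)).trans (hnear i))
      (hy _ hs) hdvd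
  · intro s hs s' hs'
    obtain ⟨i, -, rfl⟩ := Finset.mem_image.mp hs
    obtain ⟨j, -, rfl⟩ := Finset.mem_image.mp hs'
    simpa using (hnear i).sub (hnear j)

end CountingRoots

section HilbertIrreducibility

open Polynomial

/-- A monic polynomial `h` without roots in the base ring such that `Δ` lies in the ideal generated
by `h` and its derivative; thus `h` stays separable under every specialization with `Δ ≠ 0`. -/
structure IsRootlessSeparable {A : Type*} [CommRing A] (h : A[X]) (Δ : A) : Prop where
  monic : h.Monic
  exists_mul_add_mul_derivative_eq : ∃ a b, a * h + b * derivative h = C Δ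
  eval_ne_zero : ∀ y, h.eval y ≠ 0

lemma IsRootlessSeparable.map {A B : Type*} [CommRing A] [CommRing B] {h : A[X]} {Δ : A}
    (hh : IsRootlessSeparable h Δ) (f : A →+* B) (hf : ∀ y, (h.map f).eval y ≠ 0) :
    IsRootlessSeparable (h.map f) (f Δ) := by
  obtain ⟨a, b, hab⟩ := hh.exists_mul_add_mul_derivative_eq
  refine ⟨hh.monic.map f, ⟨a.map f, b.map f, ?_⟩, hf⟩
  rw [derivative_map, ← Polynomial.map_mul, ← Polynomial.map_mul, ← Polynomial.map_add, hab, map_C]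

lemma IsRootlessSeparable.map_of_bijective {A B : Type*} [CommRing A] [CommRing B] {h : A[X]}
    {Δ : A} (hh : IsRootlessSeparable h Δ) {f : A →+* B} (hf : Function.Bijective f) :
    IsRootlessSeparable (h.map f) (f Δ) := by
  refine hh.map f fun y hy => ?_
  obtain ⟨x, rfl⟩ := hf.surjective y
  rw [eval_map_apply, map_eq_zero_iff f hf.injective] at hy
  exact hh.eval_ne_zero x hy

lemma IsRootlessSeparable.of_mul_left {A : Type*} [CommRing A] {f g : A[X]} {Δ : A}
    (hfg : IsRootlessSeparable (f * g) Δ) (hf : f.Monic) : IsRootlessSeparable f Δ := by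
  obtain ⟨a, b, hab⟩ := hfg.exists_mul_add_mul_derivative_eq
  refine ⟨hf, ⟨a * g + b * derivative g, b * g, ?_⟩, fun y hy => ?_⟩
  · rw [← hab, derivative_mul]
    ring
  · exact hfg.eval_ne_zero y (by rw [eval_mul, hy, zero_mul])

lemma IsRootlessSeparable.two_le_natDegree {A : Type*} [CommRing A] {h : A[X]} {Δ : A}
    (hh : IsRootlessSeparable h Δ) (h1 : h ≠ 1) : 2 ≤ h.natDegree := by
  by_contra! hlt
  obtain h0 | h1' : h.natDegree = 0 ∨ h.natDegree = 1 := by omega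
  · exact h1 (hh.monic.natDegree_eq_zero.mp h0)
  · refine hh.eval_ne_zero (-h.coeff 0) ?_
    rw [hh.monic.as_sum, h1']
    simp

variable {R F : Type*} [CommRing R] [IsDomain R] [Field F] {ι : R →+* F[X]} {τ : R}

lemma IsRootlessSeparable.isSparse_exists_root [IsIntegrallyClosed R[X]]
    (hι : Function.Injective ι) (hτ : ι τ = X) {h : R[X][X]} {Δ : R[X]}
    (hh : IsRootlessSeparable h Δ) {x₀ : R} (hx₀ : Δ.eval x₀ ≠ 0) :
    IsSparse fun n => ∃ y, h.evalEval (x₀ + τ ^ n) y = 0 := by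
  induction hd : h.natDegree using Nat.strong_induction_on generalizing h with
  | _ d ih =>
    subst hd
    by_cases h1 : h = 1
    · exact isSparse_of_finite (by simp [h1])
    by_cases hirr : Irreducible h
    · exact isSparse_exists_root_of_irreducible hι hτ hh.monic hirr (hh.two_le_natDegree h1)
        hh.exists_mul_add_mul_derivative_eq hx₀
    · rw [hh.monic.irreducible_iff_natDegree] at hirr
      push Not at hirr
      obtain ⟨f, g, hf, hg, rfl, hf0, hg0⟩ := hirr h1
      have hdeg := hf.natDegree_mul hg
      have hf_sparse := ih f.natDegree (by omega) (hh.of_mul_left hf) rfl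
      have hg_sparse := ih g.natDegree (by omega)
        (IsRootlessSeparable.of_mul_left (by rwa [mul_comm]) hg) rfl
      refine (hf_sparse.or hg_sparse).mono fun n ⟨y, hy⟩ => ?_
      rw [evalEval_mul, mul_eq_zero] at hy
      exact hy.imp (⟨y, ·⟩) (⟨y, ·⟩)

lemma finite_setOf_eval_add_pow_eq_zero (hτ : ι τ = X) {Δ : R[X]} (hΔ : Δ ≠ 0) (x : R) :
    {n : ℕ | Δ.eval (x + τ ^ n) = 0}.Finite := by
  refine Set.Finite.preimage (f := fun n => x + τ ^ n) (s := {r | Δ.IsRoot r}) ?_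
    (finite_setOfPred_isRoot hΔ)
  intro i _ j _ hij
  simpa [hτ] using congrArg (fun r => (ι r).natDegree) (add_left_cancel hij)

lemma exists_int_polynomial_forall_root_ne [IsIntegrallyClosed R[X]]
    (hι : Function.Injective ι) (hτ : ι τ = X) {H : Finset R[X][X]} {Δ : R[X]} (hΔ : Δ ≠ 0)
    (hH : ∀ h ∈ H, IsRootlessSeparable h Δ) :
    ∃ z : ℤ[X], Δ.eval (z.eval₂ (Int.castRingHom R) τ) ≠ 0 ∧
      ∀ h ∈ H, ∀ y : R, h.evalEval (z.eval₂ (Int.castRingHom R) τ) y ≠ 0 := by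
  obtain ⟨j, hj⟩ := (isSparse_of_finite (finite_setOf_eval_add_pow_eq_zero hτ hΔ 0)).exists_not
  rw [zero_add] at hj
  obtain ⟨n, hn⟩ := ((isSparse_of_finite (finite_setOf_eval_add_pow_eq_zero hτ hΔ (τ ^ j))).or
    (isSparse_exists_mem_finset H fun h hh => (hH h hh).isSparse_exists_root hι hτ hj)).exists_not
  push Not at hn
  exact ⟨X ^ j + X ^ n, by simpa using hn.1, fun h hh y => by simpa using hn.2 h hh y⟩

lemma exists_injective_mvPolynomial_polynomial (F : Type*) [Field F] (n : ℕ) :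
    ∃ ι : MvPolynomial (Fin n) F[X] →+* (FractionRing (MvPolynomial (Fin n) F))[X],
      Function.Injective ι ∧ ι (MvPolynomial.C X) = X := by
  let e₁ := MvPolynomial.optionEquivRight F (Fin n)
  let e₂ := MvPolynomial.optionEquivLeft F (Fin n)
  refine ⟨(mapRingHom (algebraMap _ _)).comp (e₁.symm.trans e₂).toRingEquiv.toRingHom, ?_, ?_⟩
  · exact (map_injective _ (IsFractionRing.injective _ _)).comp (e₁.symm.trans e₂).injective
  · have hX : e₁.symm (MvPolynomial.C X) = MvPolynomial.X none := by
      rw [AlgEquiv.symm_apply_eq]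
      simp [e₁]
    simp [hX, e₂]

lemma eval_finCons_eq_comp {A : Type*} [CommRing A] {n : ℕ} (a : A) (t : Fin n → A) :
    MvPolynomial.eval (Fin.cons a t : Fin (n + 1) → A) = (MvPolynomial.eval t).comp
      ((evalRingHom (MvPolynomial.C a)).comp (MvPolynomial.finSuccEquiv A n).toRingHom) := by
  refine RingHom.ext fun p => ?_
  rw [MvPolynomial.eval_eq_eval_mv_eval']
  nth_rewrite 1 [← MvPolynomial.eval_C (f := t) a]
  rw [eval_map_apply]
  rfl

lemma bijective_mvPolynomial_eval_of_isEmpty {A σ : Type*} [CommRing A] [IsEmpty σ] (t : σ → A) :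
    Function.Bijective (MvPolynomial.eval t) := by
  refine ⟨fun x y hxy => ?_, fun a => ⟨_, MvPolynomial.eval_C a⟩⟩
  obtain ⟨a, rfl⟩ := MvPolynomial.C_surjective σ x
  obtain ⟨b, rfl⟩ := MvPolynomial.C_surjective σ y
  simpa using hxy

lemma eval₂_intCast_C_X {F σ : Type*} [CommRing F] (z : ℤ[X]) :
    z.eval₂ (Int.castRingHom (MvPolynomial σ F[X])) (MvPolynomial.C X) =
      MvPolynomial.C (z.map (Int.castRingHom F)) := by
  have hhom : eval₂RingHom (Int.castRingHom (MvPolynomial σ F[X])) (MvPolynomial.C X) =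
      MvPolynomial.C.comp (mapRingHom (Int.castRingHom F)) :=
    ringHom_ext' (RingHom.ext_int _ _) (by simp)
  exact DFunLike.congr_fun hhom z

theorem exists_specialization_eval_ne_zero (F : Type*) [Field F] (n : ℕ)
    (H : Finset (MvPolynomial (Fin n) F[X])[X]) {Δ : MvPolynomial (Fin n) F[X]} (hΔ : Δ ≠ 0)
    (hH : ∀ h ∈ H, IsRootlessSeparable h Δ) :
    ∃ t : Fin n → ℤ[X],
      MvPolynomial.eval (fun i => (t i).map (Int.castRingHom F)) Δ ≠ 0 ∧
      ∀ h ∈ H, ∀ y : F[X],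
        (h.map (MvPolynomial.eval (fun i => (t i).map (Int.castRingHom F)))).eval y ≠ 0 := by
  classical
  induction n with
  | zero =>
    exact ⟨0, (map_ne_zero_iff _ (bijective_mvPolynomial_eval_of_isEmpty _).injective).mpr hΔ,
      fun h hh => ((hH h hh).map_of_bijective
        (bijective_mvPolynomial_eval_of_isEmpty _)).eval_ne_zero⟩
  | succ n ih =>
    obtain ⟨ι, hι, hτ⟩ := exists_injective_mvPolynomial_polynomial F n
    let σ : MvPolynomial (Fin (n + 1)) F[X] →+* (MvPolynomial (Fin n) F[X])[X] :=
      (MvPolynomial.finSuccEquiv F[X] n).toRingHom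
    have hσ : Function.Bijective σ := (MvPolynomial.finSuccEquiv F[X] n).bijective
    have hHσ : ∀ h' ∈ H.image fun h => h.map σ, IsRootlessSeparable h' (σ Δ) := by
      simpa using fun h hh => (hH h hh).map_of_bijective hσ
    obtain ⟨z, hzΔ, hz⟩ := exists_int_polynomial_forall_root_ne hι hτ
      ((map_ne_zero_iff σ hσ.injective).mpr hΔ) hHσ
    rw [eval₂_intCast_C_X] at hzΔ hz
    let ev := (evalRingHom (MvPolynomial.C (z.map (Int.castRingHom F)))).comp σ
    obtain ⟨t, htΔ, ht⟩ := ih (H.image fun h => h.map ev) (Δ := ev Δ) hzΔ (by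
      simp only [Finset.mem_image, forall_exists_index, and_imp]
      rintro _ h hh rfl
      refine (hH h hh).map ev fun y => ?_
      rw [← Polynomial.map_map, map_evalRingHom_eval]
      exact hz _ (Finset.mem_image_of_mem _ hh) y)
    refine ⟨Fin.cons z t, ?_⟩
    have hcons : (fun i => ((Fin.cons z t : Fin (n + 1) → ℤ[X]) i).map (Int.castRingHom F)) =
        Fin.cons (z.map (Int.castRingHom F)) fun i => (t i).map (Int.castRingHom F) :=
      funext (Fin.cases rfl fun _ => rfl)
    rw [hcons, eval_finCons_eq_comp]
    refine ⟨htΔ, fun h hh y => ?_⟩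
    rw [← Polynomial.map_map]
    exact ht _ (Finset.mem_image_of_mem _ hh) y

end HilbertIrreducibility

section FieldTheory

theorem exists_isSeparable_pow_expChar_pow {κ N : Type*} [Field κ] [Field N] [Algebra κ N] (q : ℕ)
    [ExpChar κ q] {z : N} (hz : IsAlgebraic κ z) : ∃ m, IsSeparable κ (z ^ q ^ m) := by
  obtain ⟨g, hg, m, hm⟩ := (minpoly.irreducible hz.isIntegral).hasSeparableContraction q
  refine ⟨m, hg.of_dvd (minpoly.dvd κ _ ?_)⟩
  rw [← Polynomial.expand_aeval, hm, minpoly.aeval]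

theorem mem_adjoin_separableClosure_of_isAlgebraic {κ k N : Type*} [Field κ] [Field k] [Field N]
    [Algebra κ k] [Algebra κ N] [Algebra k N] [Algebra.IsSeparable k N] {z : N}
    (hz : IsAlgebraic κ z) : z ∈ IntermediateField.adjoin k (separableClosure κ N : Set N) := by
  obtain ⟨m, hm⟩ := exists_isSeparable_pow_expChar_pow (ringExpChar κ) hz
  have := expChar_of_injective_algebraMap (algebraMap κ k).injective (ringExpChar κ)
  have hz' := IntermediateField.mem_adjoin_simple_self k z
  rw [IntermediateField.adjoin_simple_eq_adjoin_pow_expChar_pow_of_isSeparable' k N z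
    (ringExpChar κ) m] at hz'
  exact IntermediateField.adjoin.mono k {z ^ ringExpChar κ ^ m} (separableClosure κ N)
    (Set.singleton_subset_iff.mpr (mem_separableClosure_iff.mpr hm)) hz'

theorem eq_of_isIntegral_of_map_eq {κ B N : Type*} [Field κ] [CommRing B] [IsDomain B] [Algebra κ B]
    [CommRing N] [Nontrivial N] (φ : B →+* N) {b c : B} (hb : IsIntegral κ b)
    (hc : IsIntegral κ c) (h : φ b = φ c) : b = c := by
  by_contra hne
  have hunit := ((hb.sub hc).isUnit (sub_ne_zero.mpr hne)).map φ
  rw [map_sub, h, sub_self] at hunit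
  exact not_isUnit_zero hunit

theorem exists_algEquiv_of_forall_mem_range {F E M : Type*} [Field F] [Field E] [Field M]
    [Algebra F E] [Algebra F M] [Algebra E M] [IsScalarTower F E M] [FiniteDimensional F E]
    (g : M ≃ₐ[F] M) (hg : ∀ x : E, g (algebraMap E M x) ∈ Set.range (algebraMap E M)) :
    ∃ σ : E ≃ₐ[F] E, ∀ x, algebraMap E M (σ x) = g (algebraMap E M x) := by
  let ι := IsScalarTower.toAlgHom F E M
  let f : E →ₐ[F] E := ((AlgEquiv.ofInjectiveField ι).symm : ι.range →ₐ[F] E).comp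
    (((g : M →ₐ[F] M).comp ι).codRestrict ι.range hg)
  refine ⟨AlgEquiv.ofBijective f f.bijective, fun x => ?_⟩
  exact congrArg Subtype.val (AlgEquiv.apply_symm_apply (AlgEquiv.ofInjectiveField ι) ⟨_, hg x⟩)

end FieldTheory

section GaloisSpecialization

open IntermediateField

theorem exists_injective_monoidHom_of_forall_exists_lift {Γ A B k N : Type*} [Group Γ] [CommRing A]
    [CommRing B] [Algebra A B] [Field k] [Field N] [Algebra k N] (ρ : Γ →* (B ≃ₐ[A] B)) {π : B → N}
    (hπ : Function.Surjective π) (hinertia : ∀ γ, (∀ b, π (ρ γ b) = π b) → γ = 1)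
    (hlift : ∀ τ : N ≃ₐ[k] N, ∃ γ, ∀ b, τ (π b) = π (ρ γ b)) :
    ∃ Ξ : (N ≃ₐ[k] N) →* Γ, Function.Injective Ξ ∧
      ∀ τ γ, Ξ τ = γ ↔ ∀ b, τ (π b) = π (ρ γ b) := by
  have huniq : ∀ γ γ', (∀ b, π (ρ γ b) = π (ρ γ' b)) → γ = γ' := fun γ γ' h => by
    refine (mul_inv_eq_one.mp (hinertia _ fun b => ?_))
    rw [map_mul, AlgEquiv.mul_apply, h, ← AlgEquiv.mul_apply, ← map_mul, mul_inv_cancel, map_one,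
      AlgEquiv.one_apply]
  choose Ξ hΞ using hlift
  refine ⟨MonoidHom.mk' Ξ fun τ τ' => huniq _ _ fun b => ?_, fun τ τ' h => ?_, fun τ γ => ⟨?_, ?_⟩⟩
  · rw [← hΞ, AlgEquiv.mul_apply, hΞ τ', hΞ τ, map_mul, AlgEquiv.mul_apply]
  · ext z
    obtain ⟨b, rfl⟩ := hπ z
    rw [hΞ, hΞ, show Ξ τ = Ξ τ' from h]
  · rintro rfl
    exact hΞ τ
  · exact fun h => huniq _ _ fun b => (hΞ τ b).symm.trans (h b)

theorem isFractionRing_of_bijective {R K : Type*} [CommRing R] [Field K] [Algebra R K]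
    (h : Function.Bijective (algebraMap R K)) : IsFractionRing R K :=
  have := (faithfulSMul_iff_algebraMap_injective R K).mpr h.1
  IsFractionRing.of_field R K fun z => by
    obtain ⟨x, rfl⟩ := h.2 z
    exact ⟨x, 1, by simp⟩

theorem exists_isIntegral_algebraMap_eq (κ A B : Type*) {M : Type*} [Field κ] [CommRing A] [Field M]
    [CommRing B] [Algebra A B] [Algebra A M] [Algebra B M] [IsIntegralClosure B A M] [Algebra κ A]
    [Algebra κ B] [Algebra κ M] [IsScalarTower κ A M] [IsScalarTower κ B M] {c : M}
    (hc : IsIntegral κ c) : ∃ b : B, IsIntegral κ b ∧ algebraMap B M b = c := by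
  obtain ⟨b, rfl⟩ := IsIntegralClosure.isIntegral_iff (A := B) |>.mp (hc.tower_top (A := A))
  exact ⟨b, (isIntegral_algebraMap_iff (IsIntegralClosure.algebraMap_injective B A M)).mp hc, rfl⟩

theorem mem_fixingSubgroup_adjoin_iff {F N : Type*} [Field F] [Field N] [Algebra F N] {S : Set N}
    {σ : N ≃ₐ[F] N} : σ ∈ (adjoin F S).fixingSubgroup ↔ ∀ x ∈ S, σ x = x := by
  rw [← Subgroup.zpowers_le, ← le_iff_le, adjoin_le_iff]
  refine forall₂_congr fun x _ => ⟨fun h => h ⟨σ, Subgroup.mem_zpowers σ⟩, fun h τ => ?_⟩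
  exact (Subgroup.zpowers_le (H := MulAction.stabilizer (N ≃ₐ[F] N) x)).mpr h τ.2

theorem algebraMap_mem_fixedField {A K M B k N : Type*} [CommRing A] [Field K] [Algebra A K]
    [IsFractionRing A K] [Field M] [Algebra K M] [Algebra.IsAlgebraic K M] [Algebra A M]
    [IsScalarTower A K M] [CommRing B] [Algebra A B] [Algebra B M] [IsScalarTower A B M]
    [IsIntegralClosure B A M] [Field k] [Field N] [Algebra k N] [Algebra B N]
    {U : Subgroup (M ≃ₐ[K] M)} {V : Subgroup (N ≃ₐ[k] N)}
    (h : ∀ τ ∈ V, ∃ γ ∈ U, ∀ b : B,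
      τ (algebraMap B N b) = algebraMap B N (galRestrict A K M B γ b))
    {b : B} (hb : algebraMap B M b ∈ fixedField U) : algebraMap B N b ∈ fixedField V := by
  rintro ⟨τ, hτ⟩
  obtain ⟨γ, hγ, hτγ⟩ := h τ hτ
  refine (hτγ b).trans (congrArg _ (IsIntegralClosure.algebraMap_injective B A M ?_))
  rw [algebraMap_galRestrict_apply]
  exact hb ⟨γ, hγ⟩

variable (κ A K M B k N : Type*) [CommRing A] [IsDomain A] [IsIntegrallyClosed A]
  [Field K] [Algebra A K] [IsFractionRing A K]
  [Field M] [Algebra K M] [Algebra A M] [IsScalarTower A K M] [FiniteDimensional K M] [IsGalois K M]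
  [CommRing B] [Algebra A B] [Algebra B M] [IsScalarTower A B M] [IsIntegralClosure B A M]
  [Field k] [Field N] [Algebra A k] [Algebra k N] [Algebra A N] [Algebra B N]
  [IsScalarTower A k N] [IsScalarTower A B N]

theorem normal_and_exists_galRestrict_apply_eq (hA : Function.Surjective (algebraMap A k))
    (hB : Function.Surjective (algebraMap B N)) :
    Normal k N ∧ ∀ τ : N ≃ₐ[k] N, ∃ γ : M ≃ₐ[K] M, ∀ b : B,
      τ (algebraMap B N b) = algebraMap B N (galRestrict A K M B γ b) := by
  have : IsDomain B := (IsIntegralClosure.algebraMap_injective B A M).isDomain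
  have : IsFractionRing B M := IsIntegralClosure.isFractionRing_of_finite_extension A K M B
  let := IsIntegralClosure.MulSemiringAction A K M B
  have := Algebra.isInvariant_of_isGalois A K M B
  have : SMulCommClass (M ≃ₐ[K] M) A B := ⟨fun γ a b => map_smul (galRestrict A K M B γ) a b⟩
  let P : Ideal A := RingHom.ker (algebraMap A k)
  let Q : Ideal B := RingHom.ker (algebraMap B N)
  have : Q.IsPrime := RingHom.ker_isPrime _
  have : P.IsPrime := RingHom.ker_isPrime _
  have : Q.LiesOver P := ⟨by
    ext a
    simp [P, Q, RingHom.mem_ker, IsScalarTower.algebraMap_apply A k N,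
      ← IsScalarTower.algebraMap_apply A B N]⟩
  let : Algebra (A ⧸ P) k := (RingHom.kerLift (algebraMap A k)).toAlgebra
  let : Algebra (B ⧸ Q) N := (RingHom.kerLift (algebraMap B N)).toAlgebra
  let : Algebra (A ⧸ P) N := ((algebraMap k N).comp (algebraMap (A ⧸ P) k)).toAlgebra
  have : IsScalarTower (A ⧸ P) k N := IsScalarTower.of_algebraMap_eq fun _ => rfl
  have : IsScalarTower (A ⧸ P) (B ⧸ Q) N := IsScalarTower.of_algebraMap_eq <|
    Ideal.Quotient.mk_surjective.forall.mpr fun a =>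
      (IsScalarTower.algebraMap_apply A k N a).symm.trans (IsScalarTower.algebraMap_apply A B N a)
  have : IsFractionRing (A ⧸ P) k := isFractionRing_of_bijective
    (RingHom.quotientKerEquivOfSurjective hA).bijective
  have : IsFractionRing (B ⧸ Q) N := isFractionRing_of_bijective
    (RingHom.quotientKerEquivOfSurjective hB).bijective
  refine ⟨Ideal.IsFractionRing.normal (M ≃ₐ[K] M) P Q k N, fun τ => ?_⟩
  obtain ⟨γ, rfl⟩ := IsFractionRing.stabilizerHom_surjective (M ≃ₐ[K] M) P Q k N τ
  exact ⟨γ, fun b => IsFractionRing.stabilizerHom_apply_apply_mk (M ≃ₐ[K] M) P Q k N γ b⟩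

variable [Field κ] [Algebra κ M] [Algebra κ N]

/-- A residue field `N` of the integral closure `B` of `A` in `M` is a *Hilbert specialization* of
`M / K` with respect to the constants `κ` if the residue field extension `N / k` is separable, the
inertia group is trivial, and a subextension of `M / K` whose integral elements all become constant
(that is, fall into `k · κˢ`) was generated by constants to begin with. -/
structure IsHilbertSpecialization : Prop where
  surjective_base : Function.Surjective (algebraMap A k)
  surjective : Function.Surjective (algebraMap B N)
  isSeparable : Algebra.IsSeparable k N
  eq_one_of_inertia : ∀ γ : M ≃ₐ[K] M,
    (∀ b : B, algebraMap B N (galRestrict A K M B γ b) = algebraMap B N b) → γ = 1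
  le_adjoin : ∀ S : IntermediateField K M,
    (∀ b : B, algebraMap B M b ∈ S → algebraMap B N b ∈ adjoin k (separableClosure κ N : Set N)) →
    S ≤ adjoin K (S ∩ separableClosure κ M : Set M)

namespace IsHilbertSpecialization

variable {κ A K M B k N}

theorem isGalois (h : IsHilbertSpecialization κ A K M B k N) : IsGalois k N :=
  have := h.isSeparable
  have := (normal_and_exists_galRestrict_apply_eq A K M B k N h.surjective_base h.surjective).1
  IsGalois.mk

theorem exists_injective_monoidHom (h : IsHilbertSpecialization κ A K M B k N) :
    ∃ Ξ : (N ≃ₐ[k] N) →* (M ≃ₐ[K] M), Function.Injective Ξ ∧ ∀ τ γ,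
      Ξ τ = γ ↔ ∀ b : B, τ (algebraMap B N b) = algebraMap B N (galRestrict A K M B γ b) :=
  exists_injective_monoidHom_of_forall_exists_lift
    (galRestrict A K M B : (M ≃ₐ[K] M) →* (B ≃ₐ[A] B)) h.surjective h.eq_one_of_inertia
    (normal_and_exists_galRestrict_apply_eq A K M B k N h.surjective_base h.surjective).2

theorem finiteDimensional (h : IsHilbertSpecialization κ A K M B k N) : FiniteDimensional k N := by
  have := h.isGalois
  obtain ⟨Ξ, hΞ, -⟩ := h.exists_injective_monoidHom
  have := Finite.of_injective Ξ hΞ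
  exact IsGalois.finiteDimensional_of_finite k N

variable [Algebra κ A] [Algebra κ k] [Algebra κ B] [IsScalarTower κ A B] [IsScalarTower κ B M]

theorem mem_adjoin_of_isAlgebraic (h : IsHilbertSpecialization κ A K M B k N)
    {Ψ : (M ≃ₐ[K] M) ≃* (N ≃ₐ[k] N)}
    (hΨ : ∀ γ (b : B), Ψ γ (algebraMap B N b) = algebraMap B N (galRestrict A K M B γ b))
    {z : N} (hz : IsAlgebraic κ z) :
    z ∈ adjoin k (algebraMap B N '' {b | IsIntegral κ b ∧
      ∀ γ, Ψ γ z = z → γ (algebraMap B M b) = algebraMap B M b}) := by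
  have := h.isGalois
  have := h.isSeparable
  have : IsDomain B := (IsIntegralClosure.algebraMap_injective B A M).isDomain
  have : IsScalarTower κ A M := IsScalarTower.to₁₂₄ κ A B M
  let U : Subgroup (M ≃ₐ[K] M) := k⟮z⟯.fixingSubgroup.comap (Ψ : (M ≃ₐ[K] M) →* (N ≃ₐ[k] N))
  have hU : ∀ γ, γ ∈ U ↔ Ψ γ z = z := fun γ =>
    mem_fixingSubgroup_adjoin_iff.trans
      (by simp only [Set.mem_singleton_iff, forall_eq, MonoidHom.coe_coe])
  have hS : fixedField U ≤ adjoin K (fixedField U ∩ separableClosure κ M : Set M) := by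
    refine h.le_adjoin _ fun b hb => ?_
    have hbz : algebraMap B N b ∈ k⟮z⟯ := by
      rw [← InfiniteGalois.fixedField_fixingSubgroup k⟮z⟯]
      exact algebraMap_mem_fixedField (Ψ.surjective.forall.mpr fun γ hγ => ⟨γ, hγ, hΨ γ⟩) hb
    exact adjoin_simple_le_iff.mpr (mem_adjoin_separableClosure_of_isAlgebraic hz) hbz
  rw [← InfiniteGalois.fixedField_fixingSubgroup (adjoin k _)]
  rintro ⟨τ, hτ⟩
  obtain ⟨γ, rfl⟩ := Ψ.surjective τ
  have hγ : γ ∈ (fixedField U).fixingSubgroup := by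
    refine fixingSubgroup_le hS (mem_fixingSubgroup_adjoin_iff.mpr ?_)
    rintro c ⟨hcU, hc⟩
    obtain ⟨b, hb, rfl⟩ := exists_isIntegral_algebraMap_eq κ A B
      (mem_separableClosure_iff.mp hc).isIntegral
    have hbτ : Ψ γ (algebraMap B N b) = algebraMap B N b := mem_fixingSubgroup_adjoin_iff.mp hτ _
      ⟨b, ⟨hb, fun γ' hγ' => hcU ⟨γ', (hU γ').mpr hγ'⟩⟩, rfl⟩
    rw [← algebraMap_galRestrict_apply A γ]
    congr 1
    refine eq_of_isIntegral_of_map_eq (algebraMap B N) ?_ hb ((hΨ γ b).symm.trans hbτ)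
    exact hb.map ((galRestrict A K M B γ : B →ₐ[A] B).restrictScalars κ)
  rw [fixingSubgroup_fixedField] at hγ
  exact (hU γ).mp hγ

variable [IsScalarTower κ k N] [IsScalarTower κ B N]

theorem exists_mulEquiv (h : IsHilbertSpecialization κ A K M B k N)
    (hk : algebraicClosure κ k = ⊥) :
    ∃ Ψ : (M ≃ₐ[K] M) ≃* (N ≃ₐ[k] N), ∀ γ (b : B),
      Ψ γ (algebraMap B N b) = algebraMap B N (galRestrict A K M B γ b) := by
  have := h.isGalois
  have : IsDomain B := (IsIntegralClosure.algebraMap_injective B A M).isDomain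
  have : IsScalarTower κ A M := IsScalarTower.to₁₂₄ κ A B M
  obtain ⟨Ξ, hinj, hΞ'⟩ := h.exists_injective_monoidHom
  have hΞ := fun τ => (hΞ' τ _).mp rfl
  have hbase : ∀ b : B, algebraMap B M b ∈ fixedField Ξ.range →
      algebraMap B N b ∈ (⊥ : IntermediateField k N) := fun b hb =>
    (InfiniteGalois.mem_bot_iff_fixed _).mpr fun τ => algebraMap_mem_fixedField (V := ⊤)
      (U := Ξ.range)
        (fun τ _ => ⟨Ξ τ, ⟨τ, rfl⟩, hΞ τ⟩) hb ⟨τ, Subgroup.mem_top τ⟩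
  have hfixed : fixedField Ξ.range = ⊥ := by
    have hle := h.le_adjoin _ fun b hb => bot_le (a := adjoin k _) (hbase b hb)
    refine le_bot_iff.mp (hle.trans (adjoin_le_iff.mpr ?_))
    rintro c ⟨hcS, hc⟩
    obtain ⟨b, hb, rfl⟩ := exists_isIntegral_algebraMap_eq κ A B
      (mem_separableClosure_iff.mp hc).isIntegral
    obtain ⟨x, hx⟩ := mem_bot.mp (hbase b hcS)
    have hxκ : x ∈ algebraicClosure κ k := mem_algebraicClosure_iff'.mpr <|
      (isIntegral_algebraMap_iff (algebraMap k N).injective).mp (hx ▸ hb.algebraMap)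
    obtain ⟨a, rfl⟩ := mem_bot.mp (hk ▸ hxκ)
    have hab : b = algebraMap κ B a := eq_of_isIntegral_of_map_eq (algebraMap B N) hb
      isIntegral_algebraMap (by
        rw [← hx, ← IsScalarTower.algebraMap_apply, ← IsScalarTower.algebraMap_apply])
    refine mem_bot.mpr ⟨algebraMap A K (algebraMap κ A a), ?_⟩
    rw [hab, ← IsScalarTower.algebraMap_apply, ← IsScalarTower.algebraMap_apply,
      ← IsScalarTower.algebraMap_apply]
  have hsurj : Ξ.range = ⊤ := by
    rw [← fixingSubgroup_fixedField Ξ.range, hfixed, fixingSubgroup_bot]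
  let Ψ := (MulEquiv.ofBijective Ξ ⟨hinj, MonoidHom.range_eq_top.mp hsurj⟩).symm
  refine ⟨Ψ, fun γ b => ?_⟩
  rw [hΞ, show Ξ (Ψ γ) = γ from Ψ.symm_apply_apply γ]

end IsHilbertSpecialization

end GaloisSpecialization

section IntermediateSpecialization

/-- A residue ring `E'` of the integral closure `C` of `A` in `E` is a *regular specialization* of
`E / K` with respect to the constants `κ` if `E' / k` is finite separable, has the automorphism
group of `E / K` through the action of the latter on `C`, and has no new constants: its elements
algebraic over `κ` come from `k` and the constants in `C`. -/
structure IsRegularSpecialization (κ A K E C k E' : Type*) [CommRing κ] [CommRing A] [IsDomain A]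
    [Field K] [Algebra A K] [IsFractionRing A K] [Field E] [Algebra K E] [FiniteDimensional K E]
    [Algebra A E] [IsScalarTower A K E] [CommRing C] [Algebra A C] [Algebra C E]
    [IsScalarTower A C E] [IsIntegralClosure C A E] [Field k] [CommRing E'] [Algebra k E']
    [Algebra C E'] [Algebra κ C] [Algebra κ E'] : Prop where
  finiteDimensional : FiniteDimensional k E'
  isSeparable : Algebra.IsSeparable k E'
  exists_mulEquiv : ∃ Φ : (E ≃ₐ[K] E) ≃* (E' ≃ₐ[k] E'), ∀ σ (c : C),
    Φ σ (algebraMap C E' c) = algebraMap C E' (galRestrict A K E C σ c)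
  mem_adjoin : ∀ z : E', IsAlgebraic κ z →
    z ∈ Algebra.adjoin k (algebraMap C E' '' {c | IsIntegral κ c})

theorem IsRegularSpecialization.exists_solution {κ A K E C k E' L G : Type*} [CommRing κ]
    [CommRing A] [IsDomain A] [Field K] [Algebra A K] [IsFractionRing A K] [Field E] [Algebra K E]
    [FiniteDimensional K E] [Algebra A E] [IsScalarTower A K E] [CommRing C] [Algebra A C]
    [Algebra C E] [IsScalarTower A C E] [IsIntegralClosure C A E] [Field k] [CommRing E']
    [Algebra k E'] [Algebra C E'] [Algebra κ C] [Algebra κ E'] [Algebra k C] [IsScalarTower k C E']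
    [Semiring L] [Algebra k L] [Group G] (h : IsRegularSpecialization κ A K E C k E')
    (f : L →ₐ[k] C) (α : G →* (L ≃ₐ[k] L)) (β : (E ≃ₐ[K] E) ≃* G)
    (hβ : ∀ σ x, σ (algebraMap C E (f x)) = algebraMap C E (f (α (β σ) x)))
    (hf : ∀ c, IsIntegral κ c → c ∈ f.range) :
    ∃ β' : (E' ≃ₐ[k] E') ≃* G,
      (∀ σ x, σ (algebraMap C E' (f x)) = algebraMap C E' (f (α (β' σ) x))) ∧
      ∀ z : E', IsAlgebraic κ z → ∃ x, z = algebraMap C E' (f x) := by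
  obtain ⟨Φ, hΦ⟩ := h.exists_mulEquiv
  refine ⟨Φ.symm.trans β, Φ.surjective.forall.mpr fun σ x => ?_, fun z hz => ?_⟩
  · rw [hΦ, MulEquiv.trans_apply, Φ.symm_apply_apply]
    refine congrArg _ (IsIntegralClosure.algebraMap_injective C A E ?_)
    rw [algebraMap_galRestrict_apply, hβ]
  · suffices Algebra.adjoin k (algebraMap C E' '' {c | IsIntegral κ c}) ≤
        f.range.map (IsScalarTower.toAlgHom k C E') by
      obtain ⟨_, ⟨x, rfl⟩, hx⟩ := this (h.mem_adjoin z hz)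
      exact ⟨x, hx.symm⟩
    exact Algebra.adjoin_le (Set.image_mono hf)

variable {A K M B k N E C E' : Type*} [CommRing A] [Field K] [Algebra A K] [IsFractionRing A K]
  [Field M] [Algebra K M] [Algebra A M] [IsScalarTower A K M] [FiniteDimensional K M]
  [CommRing B] [Algebra A B] [Algebra B M] [IsScalarTower A B M] [IsIntegralClosure B A M]
  [Field E] [Algebra K E] [Algebra E M] [Algebra A E] [IsScalarTower A K E] [FiniteDimensional K E]
  [CommRing C] [Algebra A C] [Algebra C E] [IsScalarTower A C E] [IsIntegralClosure C A E]
  [Algebra C B] [Algebra C M] [IsScalarTower C E M] [IsScalarTower C B M]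

theorem galRestrict_algebraMap_of_forall_algebraMap_eq {γ : M ≃ₐ[K] M} {σ : E ≃ₐ[K] E}
    (hσ : ∀ x, algebraMap E M (σ x) = γ (algebraMap E M x)) (c : C) :
    galRestrict A K M B γ (algebraMap C B c) = algebraMap C B (galRestrict A K E C σ c) := by
  apply IsIntegralClosure.algebraMap_injective B A M
  rw [algebraMap_galRestrict_apply, ← IsScalarTower.algebraMap_apply,
    ← IsScalarTower.algebraMap_apply, IsScalarTower.algebraMap_apply C E M,
    IsScalarTower.algebraMap_apply C E M, algebraMap_galRestrict_apply, hσ]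

variable [Field k] [Field N] [Algebra k N] [Algebra B N] [Field E'] [Algebra C E'] [Algebra E' N]
  [Algebra C N] [IsScalarTower C E' N] [IsScalarTower C B N]
  {Ψ : (M ≃ₐ[K] M) ≃* (N ≃ₐ[k] N)}
  (hΨ : ∀ γ (b : B), Ψ γ (algebraMap B N b) = algebraMap B N (galRestrict A K M B γ b))

include hΨ

theorem apply_algebraMap_of_forall_algebraMap_eq {γ : M ≃ₐ[K] M} {σ : E ≃ₐ[K] E}
    (hσ : ∀ x, algebraMap E M (σ x) = γ (algebraMap E M x)) (c : C) :
    Ψ γ (algebraMap E' N (algebraMap C E' c)) =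
      algebraMap E' N (algebraMap C E' (galRestrict A K E C σ c)) := by
  simp only [← IsScalarTower.algebraMap_apply C E' N, IsScalarTower.algebraMap_apply C B N, hΨ,
    galRestrict_algebraMap_of_forall_algebraMap_eq hσ]

variable [IsDomain A] [IsGalois K M] [IsScalarTower K E M]

theorem forall_apply_algebraMap_eq_iff (hB : Function.Surjective (algebraMap B N))
    (hC : Function.Surjective (algebraMap C E')) {γ : M ≃ₐ[K] M} :
    (∀ y, Ψ γ (algebraMap E' N y) = algebraMap E' N y) ↔
      ∀ x, γ (algebraMap E M x) = algebraMap E M x := by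
  have : IsScalarTower A E M := IsScalarTower.to₁₃₄ A K E M
  refine ⟨fun h => ?_, fun h => hC.forall.mpr fun c => ?_⟩
  · have : IsDomain C := (IsIntegralClosure.algebraMap_injective C A E).isDomain
    have : IsFractionRing C E := IsIntegralClosure.isFractionRing_of_finite_extension A K E C
    have : IsIntegrallyClosedIn C E := .of_isIntegralClosure A
    have : IsIntegrallyClosed C := .of_isIntegrallyClosedIn C E
    have : IsScalarTower A C M := IsScalarTower.to₁₂₄ A C E M
    have := IsIntegralClosure.isIntegral_algebra A (A := C) E
    have : IsIntegralClosure B C M := IsIntegralClosure.tower_top (R := A)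
    have : FiniteDimensional E M := .right K E M
    have : IsGalois E M := .tower_top_of_isGalois K E M
    obtain ⟨γ', hγ'⟩ := (normal_and_exists_galRestrict_apply_eq C E M B E' N hC hB).2
      (AlgEquiv.ofRingEquiv (f := (Ψ γ).toRingEquiv) h)
    have hγ : γ'.restrictScalars K = γ := by
      refine Ψ.injective (AlgEquiv.ext (hB.forall.mpr fun b => ?_))
      exact (hΨ _ b).trans (hγ' b).symm
    rw [← hγ]
    exact γ'.commutes
  · have hσ : ∀ x, algebraMap E M ((1 : E ≃ₐ[K] E) x) = γ (algebraMap E M x) := fun x => (h x).symm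
    simpa using apply_algebraMap_of_forall_algebraMap_eq (E' := E') hΨ hσ c

variable [Algebra k E']

theorem algebraMap_mem_range_of_symm_apply (hB : Function.Surjective (algebraMap B N))
    (hC : Function.Surjective (algebraMap C E')) {τ : E' ≃ₐ[k] E'} {τ' : N ≃ₐ[k] N}
    (hτ : ∀ y, τ' (algebraMap E' N y) = algebraMap E' N (τ y)) (x : E) :
    Ψ.symm τ' (algebraMap E M x) ∈ Set.range (algebraMap E M) := by
  have : FiniteDimensional E M := .right K E M
  have : IsGalois E M := .tower_top_of_isGalois K E M
  refine (IsGalois.mem_range_algebraMap_iff_fixed _).mpr fun f => ?_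
  let γ := Ψ.symm τ'
  have hf := (forall_apply_algebraMap_eq_iff (γ := f.restrictScalars K) hΨ hB hC).mpr f.commutes
  have hconj : ∀ y, Ψ (γ⁻¹ * f.restrictScalars K * γ) (algebraMap E' N y) = algebraMap E' N y :=
    fun y => by
      rw [map_mul, map_mul, map_inv, MulEquiv.apply_symm_apply, AlgEquiv.mul_apply,
        AlgEquiv.mul_apply, hτ, hf, ← hτ, ← AlgEquiv.mul_apply, inv_mul_cancel, AlgEquiv.one_apply]
  have := congrArg γ ((forall_apply_algebraMap_eq_iff hΨ hB hC).mp hconj x)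
  rwa [← AlgEquiv.mul_apply, mul_assoc, mul_inv_cancel_left] at this

variable [IsScalarTower k E' N]

theorem exists_mulEquiv_of_isScalarTower [IsGalois k N] [FiniteDimensional k N]
    (hB : Function.Surjective (algebraMap B N)) (hC : Function.Surjective (algebraMap C E')) :
    ∃ Φ : (E ≃ₐ[K] E) ≃* (E' ≃ₐ[k] E'), ∀ σ (c : C),
      Φ σ (algebraMap C E' c) = algebraMap C E' (galRestrict A K E C σ c) := by
  have : FiniteDimensional k E' := .left k E' N
  have hM : ∀ (σ : E ≃ₐ[K] E) x, algebraMap E M (σ x) = σ.liftNormal M (algebraMap E M x) :=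
    fun σ x => (σ.liftNormal_commutes M x).symm
  have hN : ∀ (τ : E' ≃ₐ[k] E') y, τ.liftNormal N (algebraMap E' N y) = algebraMap E' N (τ y) :=
    fun τ => τ.liftNormal_commutes N
  have hinertia : ∀ σ : E ≃ₐ[K] E,
      (∀ c : C, algebraMap C E' (galRestrict A K E C σ c) = algebraMap C E' c) → σ = 1 := by
    intro σ hσ
    have hfix : ∀ y, Ψ (σ.liftNormal M) (algebraMap E' N y) = algebraMap E' N y :=
      hC.forall.mpr fun c => by rw [apply_algebraMap_of_forall_algebraMap_eq hΨ (hM σ), hσ]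
    ext x
    apply (algebraMap E M).injective
    rw [hM, (forall_apply_algebraMap_eq_iff hΨ hB hC).mp hfix, AlgEquiv.one_apply]
  have hlift : ∀ τ : E' ≃ₐ[k] E', ∃ σ : E ≃ₐ[K] E, ∀ c : C,
      τ (algebraMap C E' c) = algebraMap C E' (galRestrict A K E C σ c) := by
    intro τ
    obtain ⟨σ, hσ⟩ := exists_algEquiv_of_forall_mem_range _
      (algebraMap_mem_range_of_symm_apply hΨ hB hC (E := E) (hN τ))
    refine ⟨σ, fun c => (algebraMap E' N).injective ?_⟩
    rw [← hN, ← Ψ.apply_symm_apply (τ.liftNormal N)]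
    exact apply_algebraMap_of_forall_algebraMap_eq hΨ hσ c
  obtain ⟨Ξ, hinj, hΞ⟩ := exists_injective_monoidHom_of_forall_exists_lift
    (galRestrict A K E C : (E ≃ₐ[K] E) →* (C ≃ₐ[A] C)) hC hinertia hlift
  have hsurj : Function.Surjective Ξ := by
    intro σ
    obtain ⟨τ, hτ⟩ := exists_algEquiv_of_forall_mem_range (E := E') (Ψ (σ.liftNormal M))
      (hC.forall.mpr fun c =>
        ⟨_, (apply_algebraMap_of_forall_algebraMap_eq hΨ (hM σ) c).symm⟩)
    refine ⟨τ, (hΞ τ σ).mpr fun c => (algebraMap E' N).injective ?_⟩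
    rw [hτ, apply_algebraMap_of_forall_algebraMap_eq hΨ (hM σ)]
    rfl
  let Φ := (MulEquiv.ofBijective Ξ ⟨hinj, hsurj⟩).symm
  exact ⟨Φ, fun σ => (hΞ _ σ).mp (Φ.symm_apply_apply σ)⟩

variable {κ : Type*} [Field κ] [Algebra κ A] [Algebra κ M] [Algebra κ B] [Algebra κ E] [Algebra κ C]
  [Algebra κ k] [Algebra κ N] [Algebra κ E'] [IsScalarTower κ A B] [IsScalarTower κ B M]
  [IsScalarTower κ A E] [IsScalarTower κ C E] [IsScalarTower κ E M] [IsScalarTower κ E' N]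
  [IsIntegrallyClosed A] [Algebra A k] [Algebra A N] [IsScalarTower A k N] [IsScalarTower A B N]

variable (E) in
include E in
theorem IsHilbertSpecialization.mem_adjoin_of_isScalarTower
    (h : IsHilbertSpecialization κ A K M B k N) (hC : Function.Surjective (algebraMap C E'))
    {z : E'} (hz : IsAlgebraic κ z) :
    z ∈ IntermediateField.adjoin k (algebraMap C E' '' {c | IsIntegral κ c}) := by
  have : FiniteDimensional E M := .right K E M
  have : IsGalois E M := .tower_top_of_isGalois K E M
  let ι := IsScalarTower.toAlgHom k E' N
  suffices algebraMap E' N z ∈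
      (IntermediateField.adjoin k (algebraMap C E' '' {c | IsIntegral κ c})).map ι by
    simpa [ι] using this
  refine IntermediateField.adjoin_le_iff.mpr ?_ (h.mem_adjoin_of_isAlgebraic hΨ hz.algebraMap)
  rintro _ ⟨b, ⟨hb, hfix⟩, rfl⟩
  obtain ⟨x, hx⟩ := (IsGalois.mem_range_algebraMap_iff_fixed (F := E) (algebraMap B M b)).mpr
    fun f => hfix (f.restrictScalars K)
      ((forall_apply_algebraMap_eq_iff hΨ h.surjective hC).mpr f.commutes z)
  obtain ⟨c, hc, rfl⟩ := exists_isIntegral_algebraMap_eq κ A C (c := x)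
    ((isIntegral_algebraMap_iff (algebraMap E M).injective).mp (hx ▸ hb.algebraMap))
  have hcb : algebraMap C B c = b := by
    apply IsIntegralClosure.algebraMap_injective B A M
    rw [← hx, ← IsScalarTower.algebraMap_apply, ← IsScalarTower.algebraMap_apply]
  rw [← hcb, ← IsScalarTower.algebraMap_apply, IsScalarTower.algebraMap_apply C E' N]
  exact ⟨_, IntermediateField.subset_adjoin _ _ ⟨c, hc, rfl⟩, rfl⟩

omit hΨ in
variable (E) in
theorem IsHilbertSpecialization.isRegularSpecialization [IsScalarTower κ k N] [IsScalarTower κ B N]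
    (h : IsHilbertSpecialization κ A K M B k N) (hk : algebraicClosure κ k = ⊥)
    (hC : Function.Surjective (algebraMap C E')) : IsRegularSpecialization κ A K E C k E' := by
  have := h.finiteDimensional
  have := h.isSeparable
  have := h.isGalois
  have : FiniteDimensional k E' := .left k E' N
  obtain ⟨Ψ, hΨ⟩ := h.exists_mulEquiv hk
  refine ⟨this, Algebra.isSeparable_tower_bot_of_isSeparable k E' N,
    exists_mulEquiv_of_isScalarTower hΨ h.surjective hC, fun z hz => ?_⟩
  rw [← IntermediateField.adjoin_toSubalgebra_of_isAlgebraic fun x _ =>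
    Algebra.IsAlgebraic.isAlgebraic x]
  exact h.mem_adjoin_of_isScalarTower E hΨ hC hz

end IntermediateSpecialization

section ConstantsInCompositum

open IntermediateField Polynomial

variable {κ K Ω : Type*} [Field κ] [Field K] [Field Ω] [Algebra κ K] [Algebra κ Ω] [Algebra K Ω]
  [IsScalarTower κ K Ω]

theorem exists_isSeparable_mem_adjoin_simple_of_mem_adjoin_separableClosure {x : Ω}
    (hx : x ∈ adjoin K (separableClosure κ Ω : Set Ω)) : ∃ f : Ω, IsSeparable κ f ∧ x ∈ K⟮f⟯ := by
  obtain ⟨T, hT, hxT⟩ := exists_finset_of_mem_adjoin hx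
  have hsep : ∀ y ∈ (T : Set Ω), IsSeparable κ y := fun y hy => mem_separableClosure_iff.mp (hT hy)
  have : FiniteDimensional κ (adjoin κ (T : Set Ω)) :=
    finiteDimensional_adjoin fun y hy => (hsep y hy).isIntegral
  have := (isSeparable_adjoin_iff_isSeparable κ Ω).mpr hsep
  obtain ⟨f, hf⟩ := Field.exists_primitive_element κ (adjoin κ (T : Set Ω))
  have hTf : adjoin κ (T : Set Ω) = κ⟮(f : Ω)⟯ := by
    rw [← lift_adjoin_simple, hf, lift_top]
  have hfK : κ⟮(f : Ω)⟯ ≤ K⟮(f : Ω)⟯.restrictScalars κ :=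
    adjoin_simple_le_iff.mpr (mem_adjoin_simple_self K _)
  exact ⟨f, mem_separableClosure_iff.mp (adjoin_le_iff.mpr hT f.2),
    (adjoin_le_iff (T := K⟮(f : Ω)⟯)).mpr (fun y hy => hfK (hTf ▸ subset_adjoin κ _ hy)) hxT⟩

theorem minpoly_coeff_mem_separableClosure [IsAlgClosed Ω] (S : IntermediateField K Ω) {f : Ω}
    (hf : IsSeparable κ f) (i : ℕ) : ((minpoly S f).coeff i : Ω) ∈ separableClosure κ Ω := by
  have : IsScalarTower κ S Ω := .of_algebraMap_eq fun _ => rfl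
  have hmonic : (minpoly S f).Monic := minpoly.monic hf.isIntegral.tower_top
  have hroots : ∀ a ∈ ((minpoly S f).map (algebraMap S Ω)).roots,
      a ∈ (algebraMap (separableClosure κ Ω) Ω).range := by
    intro a ha
    have ha₀ : aeval a (minpoly S f) = 0 := by
      rw [aeval_def, ← eval_map]
      exact (mem_roots'.mp ha).2
    have haκ : aeval a (minpoly κ f) = 0 := by
      rw [← aeval_map_algebraMap S a]
      exact aeval_eq_zero_of_dvd_aeval_eq_zero (minpoly.dvd_map_of_isScalarTower κ S f) ha₀
    exact ⟨⟨a, mem_separableClosure_iff.mpr (Separable.of_dvd hf (minpoly.dvd κ a haκ))⟩, rfl⟩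
  obtain ⟨c, hc⟩ := (lifts_iff_coeff_lifts _).mp ((IsAlgClosed.splits
    ((minpoly S f).map (algebraMap S Ω))).mem_lift_of_roots_mem_range (hmonic.map _) _ hroots) i
  rw [coeff_map] at hc
  exact (show (c : Ω) = ((minpoly S f).coeff i : Ω) from hc) ▸ c.2

theorem mem_range_algebraMap_of_minpoly_mem_lifts {F S Ω : Type*} [Field F] [Field S] [Field Ω]
    [Algebra F S] [Algebra S Ω] [Algebra F Ω] [IsScalarTower F S Ω] {f : Ω} (hf : IsIntegral F f)
    (hlift : minpoly S f ∈ lifts (algebraMap F S)) {x : S} (hx : algebraMap S Ω x ∈ F⟮f⟯) :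
    x ∈ (algebraMap F S).range := by
  obtain ⟨g, hg, hdeg, hgm⟩ := lifts_and_degree_eq_and_monic hlift (minpoly.monic hf.tower_top)
  obtain ⟨r, hr⟩ : ∃ r : F[X], aeval f r = algebraMap S Ω x := by
    rwa [← mem_toSubalgebra, adjoin_simple_toSubalgebra_of_isAlgebraic hf.isAlgebraic,
      Algebra.adjoin_singleton_eq_range_aeval] at hx
  have hgf : aeval f g = 0 := by rw [← aeval_map_algebraMap S, hg, minpoly.aeval]
  let p : S[X] := (r %ₘ g).map (algebraMap F S) - C x
  have hp : aeval f p = 0 := by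
    rw [map_sub, aeval_map_algebraMap, aeval_modByMonic_eq_self_of_root hgf, hr, aeval_C, sub_self]
  have hpdeg : p.degree < (minpoly S f).degree := by
    refine (degree_sub_le _ _).trans_lt (max_lt ?_ ?_)
    · rw [← hdeg, degree_map]
      exact degree_modByMonic_lt r hgm
    · exact degree_C_le.trans_lt (minpoly.degree_pos hf.tower_top)
  have hp0 : p.coeff 0 = 0 := by
    rw [eq_zero_of_dvd_of_degree_lt (minpoly.dvd S f hp) hpdeg, coeff_zero]
  exact ⟨(r %ₘ g).coeff 0, by rwa [coeff_sub, coeff_map, coeff_C_zero, sub_eq_zero] at hp0⟩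

theorem mem_adjoin_inter_separableClosure [IsAlgClosed Ω] {S : IntermediateField K Ω} {x : Ω}
    (hxS : x ∈ S) (hx : x ∈ adjoin K (separableClosure κ Ω : Set Ω)) :
    x ∈ adjoin K (S ∩ separableClosure κ Ω : Set Ω) := by
  obtain ⟨f, hf, hxf⟩ := exists_isSeparable_mem_adjoin_simple_of_mem_adjoin_separableClosure hx
  set F := adjoin K (S ∩ separableClosure κ Ω : Set Ω)
  have hF : F ≤ S := adjoin_le_iff.mpr fun _ h => h.1
  let : Algebra F S := (inclusion hF).toAlgebra
  have : IsScalarTower F S Ω := .of_algebraMap_eq fun _ => rfl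
  have hfF : IsIntegral F f := (hf.isIntegral.tower_top (A := K)).tower_top
  have hlift : minpoly S f ∈ lifts (algebraMap F S) := (lifts_iff_coeff_lifts _).mpr fun i =>
    ⟨⟨_, subset_adjoin K _ ⟨((minpoly S f).coeff i).2, minpoly_coeff_mem_separableClosure S hf i⟩⟩,
      rfl⟩
  have hxF : x ∈ F⟮f⟯ := (adjoin_simple_le_iff (K := F⟮f⟯.restrictScalars K)).mpr
    (mem_adjoin_simple_self F f) hxf
  obtain ⟨y, hy⟩ := mem_range_algebraMap_of_minpoly_mem_lifts hfF hlift (x := ⟨x, hxS⟩) hxF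
  exact (show (y : Ω) = x from congrArg Subtype.val hy) ▸ y.2

end ConstantsInCompositum

section FaithfulSpecialization

open Polynomial

/-- Substitution of polynomials with integer coefficients for the variables of `F[X][T₁, …, Tₙ]`;
integer coefficients let one tuple `t` act over all fields at once. -/
noncomputable abbrev evalIntPoly (F : Type*) [CommRing F] {n : ℕ} (t : Fin n → ℤ[X]) :
    MvPolynomial (Fin n) F[X] →+* F[X] :=
  MvPolynomial.eval fun i => (t i).map (Int.castRingHom F)

lemma evalIntPoly_map {κ F : Type*} [CommRing κ] [CommRing F] (φ : κ →+* F) {n : ℕ}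
    (t : Fin n → ℤ[X]) (p : MvPolynomial (Fin n) κ[X]) :
    evalIntPoly F t (MvPolynomial.map (mapRingHom φ) p) = (evalIntPoly κ t p).map φ := by
  have h : (evalIntPoly F t).comp (MvPolynomial.map (mapRingHom φ)) =
      (mapRingHom φ).comp (evalIntPoly κ t) := by
    apply MvPolynomial.ringHom_ext
    · simp
    · intro i
      simp [Polynomial.map_map, RingHom.eq_intCast']
  exact DFunLike.congr_fun h p

lemma exists_mul_add_mul_derivative_eq_C {A K : Type*} [CommRing A] [IsDomain A] [Field K]
    [Algebra A K] [IsFractionRing A K] {f : A[X]} (hf : (f.map (algebraMap A K)).Separable) :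
    ∃ Δ : A, Δ ≠ 0 ∧ ∃ a b, a * f + b * derivative f = C Δ := by
  obtain ⟨a, b, hab⟩ := hf
  obtain ⟨u, hu, hau⟩ := IsLocalization.integerNormalization_spec (nonZeroDivisors A) a
  obtain ⟨v, hv, hbv⟩ := IsLocalization.integerNormalization_spec (nonZeroDivisors A) b
  have hau' : (IsLocalization.integerNormalization (nonZeroDivisors A) a).map (algebraMap A K) =
      C (algebraMap A K u) * a := by
    rw [hau, Algebra.smul_def]; rfl
  have hbv' : (IsLocalization.integerNormalization (nonZeroDivisors A) b).map (algebraMap A K) =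
      C (algebraMap A K v) * b := by
    rw [hbv, Algebra.smul_def]; rfl
  refine ⟨u * v, mul_ne_zero (nonZeroDivisors.ne_zero hu) (nonZeroDivisors.ne_zero hv),
    C v * IsLocalization.integerNormalization (nonZeroDivisors A) a,
    C u * IsLocalization.integerNormalization (nonZeroDivisors A) b,
    map_injective _ (IsFractionRing.injective A K) ?_⟩
  simp only [Polynomial.map_add, Polynomial.map_mul, map_C, hau', hbv', ← derivative_map, C_mul]
  linear_combination C (algebraMap A K u) * C (algebraMap A K v) * hab

lemma exists_monic_mul_eq_and_aeval_eq_zero {A B : Type*} [CommRing A] [IsDomain A] [CommRing B]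
    [IsDomain B] [Algebra A B] {f : A[X]} (hf : f.Monic) {θ : B} (hθ : aeval θ f = 0) :
    ∃ h g : A[X], h.Monic ∧ f = h * g ∧ aeval θ h = 0 ∧
      ∀ p, h.eval p = 0 → θ = algebraMap A B p := by
  induction hd : f.natDegree using Nat.strong_induction_on generalizing f with
  | _ d ih =>
    by_cases! hroot : ∀ p, f.eval p = 0 → θ = algebraMap A B p
    · exact ⟨f, 1, hf, (mul_one f).symm, hθ, hroot⟩
    obtain ⟨p, hp, hpθ⟩ := hroot
    obtain ⟨f₁, rfl⟩ := dvd_iff_isRoot.mpr hp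
    have hf₁ : f₁.Monic := (monic_X_sub_C p).of_mul_monic_left hf
    have hθ₁ : aeval θ f₁ = 0 := by
      rw [map_mul, map_sub, aeval_X, aeval_C] at hθ
      exact (mul_eq_zero.mp hθ).resolve_left (sub_ne_zero.mpr hpθ)
    obtain ⟨h, g, hh, rfl, hθh, hroots⟩ := ih f₁.natDegree (by
      rw [← hd, (monic_X_sub_C p).natDegree_mul hf₁, natDegree_X_sub_C]
      omega) hf₁ hθ₁ rfl
    exact ⟨h, (X - C p) * g, hh, by ring, hθh, hroots⟩

/-- The integer specialization `t` is faithful at `θ` (over `κ`, with constants extended to `F`) if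
`θ` stays separable, and does not become a polynomial in `F[X]` unless it is one generically. -/
structure IsFaithfulSpecialization (κ F : Type*) [Field κ] [Field F] {n : ℕ} (t : Fin n → ℤ[X])
    {B : Type*} [CommRing B] [Algebra (MvPolynomial (Fin n) κ[X]) B]
    [Algebra (MvPolynomial (Fin n) F[X]) B] (θ : B) : Prop where
  exists_separable : ∃ f : (MvPolynomial (Fin n) κ[X])[X], aeval θ f = 0 ∧
    ((f.map (evalIntPoly κ t)).map (algebraMap κ[X] (RatFunc κ))).Separable
  mem_range_or_rootless : θ ∈ (algebraMap (MvPolynomial (Fin n) F[X]) B).range ∨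
    ∃ h : (MvPolynomial (Fin n) F[X])[X], h.Monic ∧ aeval θ h = 0 ∧
      ∀ y, (h.map (evalIntPoly F t)).eval y ≠ 0

section Existence

variable {κ F : Type*} [Field κ] [Field F] {n : ℕ} {B : Type*} [CommRing B] [IsDomain B]
  [Algebra (MvPolynomial (Fin n) κ[X]) B] [Algebra (MvPolynomial (Fin n) F[X]) B]

lemma separable_map_evalIntPoly {t : Fin n → ℤ[X]} {f a b : (MvPolynomial (Fin n) κ[X])[X]}
    {Δ : MvPolynomial (Fin n) κ[X]} (h : a * f + b * derivative f = C Δ)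
    (hΔ : evalIntPoly κ t Δ ≠ 0) :
    ((f.map (evalIntPoly κ t)).map (algebraMap κ[X] (RatFunc κ))).Separable := by
  set ev := (algebraMap κ[X] (RatFunc κ)).comp (evalIntPoly κ t)
  have hev : ev Δ ≠ 0 := (map_ne_zero_iff _ (IsFractionRing.injective κ[X] (RatFunc κ))).mpr hΔ
  have h' : a.map ev * f.map ev + b.map ev * derivative (f.map ev) = C (ev Δ) := by
    rw [derivative_map, ← Polynomial.map_mul, ← Polynomial.map_mul, ← Polynomial.map_add, h, map_C]
  refine ⟨C (ev Δ)⁻¹ * a.map ev, C (ev Δ)⁻¹ * b.map ev, ?_⟩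
  rw [Polynomial.map_map, mul_assoc, mul_assoc, ← mul_add, h', ← C_mul, inv_mul_cancel₀ hev, C_1]

lemma mem_range_or_exists_isRootlessSeparable (φ : κ →+* F)
    (hφ : ∀ p, algebraMap (MvPolynomial (Fin n) F[X]) B (MvPolynomial.map (mapRingHom φ) p) =
      algebraMap (MvPolynomial (Fin n) κ[X]) B p)
    {f a b : (MvPolynomial (Fin n) κ[X])[X]} {Δ : MvPolynomial (Fin n) κ[X]}
    (h : a * f + b * derivative f = C Δ) (hf : f.Monic) {θ : B} (hθ : aeval θ f = 0) :
    θ ∈ (algebraMap (MvPolynomial (Fin n) F[X]) B).range ∨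
      ∃ h : (MvPolynomial (Fin n) F[X])[X], aeval θ h = 0 ∧
        IsRootlessSeparable h (MvPolynomial.map (mapRingHom φ) Δ) := by
  set ι : MvPolynomial (Fin n) κ[X] →+* MvPolynomial (Fin n) F[X] :=
    MvPolynomial.map (mapRingHom φ)
  have hθF : aeval θ (f.map ι) = 0 := by
    rw [aeval_def, eval₂_map, show (algebraMap _ B).comp ι = algebraMap _ B from RingHom.ext hφ,
      ← aeval_def, hθ]
  obtain ⟨h, g, hh, hfg, hθh, hroot⟩ := exists_monic_mul_eq_and_aeval_eq_zero (hf.map ι) hθF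
  refine or_iff_not_imp_left.mpr fun hrange => ⟨h, hθh, hh, ?_, fun y hy =>
    hrange ⟨y, (hroot y hy).symm⟩⟩
  have hbez := congrArg (Polynomial.map ι) ‹a * f + b * derivative f = C Δ›
  rw [Polynomial.map_add, Polynomial.map_mul, Polynomial.map_mul, ← derivative_map, map_C, hfg,
    derivative_mul] at hbez
  exact ⟨a.map ι * g + b.map ι * derivative g, b.map ι * g, by rw [← hbez]; ring⟩

theorem exists_isFaithfulSpecialization (K : Type*) [Field K]
    [Algebra (MvPolynomial (Fin n) κ[X]) K] [IsFractionRing (MvPolynomial (Fin n) κ[X]) K]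
    (φ : κ →+* F)
    (hφ : ∀ p, algebraMap (MvPolynomial (Fin n) F[X]) B (MvPolynomial.map (mapRingHom φ) p) =
      algebraMap (MvPolynomial (Fin n) κ[X]) B p) (Θ : Finset B)
    (hΘ : ∀ θ ∈ Θ, ∃ f : (MvPolynomial (Fin n) κ[X])[X], f.Monic ∧ aeval θ f = 0 ∧
      (f.map (algebraMap _ K)).Separable) :
    ∃ t : Fin n → ℤ[X], ∀ θ ∈ Θ, IsFaithfulSpecialization κ F t θ := by
  classical
  choose! f hf using hΘ
  choose! Δ hΔ a b hab using fun θ hθ => exists_mul_add_mul_derivative_eq_C (hf θ hθ).2.2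
  have hab' : ∀ θ ∈ Θ, (C (∏ θ' ∈ Θ.erase θ, Δ θ') * a θ) * f θ +
      (C (∏ θ' ∈ Θ.erase θ, Δ θ') * b θ) * derivative (f θ) = C (∏ θ' ∈ Θ, Δ θ') := by
    intro θ hθ
    rw [← Finset.mul_prod_erase _ _ hθ, C_mul, ← hab θ hθ]
    ring
  choose! h hh using fun θ hθ => or_iff_not_imp_left.mp
    (mem_range_or_exists_isRootlessSeparable φ hφ (hab' θ hθ) (hf θ hθ).1 (hf θ hθ).2.1)
  obtain ⟨t, htΔ, ht⟩ := exists_specialization_eval_ne_zero F n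
    ((Θ.filter (· ∉ (algebraMap (MvPolynomial (Fin n) F[X]) B).range)).image h)
    ((map_ne_zero_iff _ (MvPolynomial.map_injective _ (map_injective φ φ.injective))).mpr
      (Finset.prod_ne_zero_iff.mpr hΔ)) (by
      simp only [Finset.mem_image, Finset.mem_filter, forall_exists_index, and_imp]
      rintro _ θ hθ hrange rfl
      exact (hh θ hθ hrange).2)
  have htΔκ : evalIntPoly κ t (∏ θ ∈ Θ, Δ θ) ≠ 0 := fun h₀ => htΔ (by
    rw [evalIntPoly_map, h₀, Polynomial.map_zero])
  refine ⟨t, fun θ hθ =>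
    ⟨⟨f θ, (hf θ hθ).2.1, separable_map_evalIntPoly (hab' θ hθ) htΔκ⟩, ?_⟩⟩
  refine or_iff_not_imp_left.mpr fun hrange => ⟨h θ, (hh θ hθ hrange).2.monic,
    (hh θ hθ hrange).1, ht _ (Finset.mem_image_of_mem h (Finset.mem_filter.mpr ⟨hθ, hrange⟩))⟩

end Existence

section SeparableConstants

variable {κ F R : Type*} [Field κ] [Field F] [Field R] [Algebra κ F] [Algebra κ R]
  [Algebra F R] [IsScalarTower κ F R]

lemma separableClosure_le_range_algebraMap [IsSepClosed F] :
    (separableClosure κ R : Set R) ⊆ (algebraMap F R).range := by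
  intro z hz
  have hzF : IsSeparable F z := (mem_separableClosure_iff.mp hz).tower_top F
  exact minpoly.mem_range_of_degree_eq_one F z
    (IsSepClosed.degree_eq_one_of_irreducible F (minpoly.irreducible hzF.isIntegral) hzF)

variable [Algebra (RatFunc κ) R] [IsScalarTower κ (RatFunc κ) R] [Algebra.IsAlgebraic κ F]

lemma injective_aeval_algebraMap_X :
    Function.Injective (aeval (R := F) (algebraMap (RatFunc κ) R RatFunc.X)) := by
  have hκ : Transcendental κ (algebraMap (RatFunc κ) R RatFunc.X) :=
    (transcendental_algebraMap_iff (algebraMap (RatFunc κ) R).injective).mpr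
      RatFunc.transcendental_X
  exact transcendental_iff_injective.mp fun h => hκ (h.restrictScalars κ)

lemma exists_aeval_eq_of_mem_adjoin_separableClosure [IsSepClosed F] {z : R}
    (hz : z ∈ IntermediateField.adjoin (RatFunc κ) (separableClosure κ R : Set R))
    (hint : (aeval (R := F) (algebraMap (RatFunc κ) R RatFunc.X)).IsIntegralElem z) :
    ∃ y : F[X], aeval (algebraMap (RatFunc κ) R RatFunc.X) y = z := by
  set x := algebraMap (RatFunc κ) R RatFunc.X
  let _ : Algebra F[X] R := (aeval x).toAlgebra
  have hinj : Function.Injective (algebraMap F[X] R) := injective_aeval_algebraMap_X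
  let ψ : FractionRing F[X] →+* R := IsFractionRing.lift hinj
  have hψ : ∀ p : F[X], ψ (algebraMap _ _ p) = aeval x p := IsFractionRing.lift_algebraMap hinj
  have hx : ∀ p : κ[X], algebraMap (RatFunc κ) R (algebraMap _ _ p) = aeval x p := fun p => by
    rw [← RatFunc.aeval_X_left_eq_algebraMap p, ← aeval_algebraMap_apply]
  have hle : (IntermediateField.adjoin (RatFunc κ) (separableClosure κ R : Set R)).toSubfield ≤
      ψ.fieldRange := by
    refine IntermediateField.adjoin_le_subfield (RatFunc κ) _ ?_ ?_
    · rintro _ ⟨r, rfl⟩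
      refine ⟨algebraMap _ _ (r.num.map (algebraMap κ F)) /
        algebraMap _ _ (r.denom.map (algebraMap κ F)), ?_⟩
      rw [map_div₀, hψ, hψ, aeval_map_algebraMap, aeval_map_algebraMap, ← hx, ← hx, ← map_div₀,
        RatFunc.num_div_denom]
    · intro a ha
      obtain ⟨c, rfl⟩ := separableClosure_le_range_algebraMap (κ := κ) (F := F) ha
      exact ⟨algebraMap _ _ (C c), by rw [hψ, aeval_C]⟩
  obtain ⟨s, rfl⟩ := hle hz
  obtain ⟨g, hg, hgs⟩ := hint
  have hs : IsIntegral F[X] s := by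
    refine ⟨g, hg, ψ.injective ?_⟩
    rw [map_zero, hom_eval₂, ← hgs]
    congr 1
    exact RingHom.ext hψ
  obtain ⟨y, rfl⟩ := IsIntegrallyClosed.algebraMap_eq_of_integral hs
  exact ⟨y, (hψ y).symm⟩

end SeparableConstants

namespace IsFaithfulSpecialization

variable {κ F R : Type*} [Field κ] [Field F] [Field R] {n : ℕ} {t : Fin n → ℤ[X]}
  {B : Type*} [CommRing B] [Algebra (MvPolynomial (Fin n) κ[X]) B]
  [Algebra (MvPolynomial (Fin n) F[X]) B] [Algebra B R] [Algebra (RatFunc κ) R] {θ : B}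

lemma aeval_algebraMap_map_eq_zero
    (ht : ∀ p : MvPolynomial (Fin n) κ[X], algebraMap B R (algebraMap _ B p) =
      algebraMap (RatFunc κ) R (algebraMap κ[X] _ (evalIntPoly κ t p)))
    {f : (MvPolynomial (Fin n) κ[X])[X]} (hf : aeval θ f = 0) :
    aeval (algebraMap B R θ) ((f.map (evalIntPoly κ t)).map (algebraMap κ[X] (RatFunc κ))) = 0 := by
  have h := congrArg (algebraMap B R) hf
  rw [map_zero, aeval_def, hom_eval₂] at h
  rw [aeval_def, eval₂_map, eval₂_map, ← h]
  congr 1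
  exact RingHom.ext fun p => (ht p).symm

lemma isSeparable (hθ : IsFaithfulSpecialization κ F t θ)
    (ht : ∀ p : MvPolynomial (Fin n) κ[X], algebraMap B R (algebraMap _ B p) =
      algebraMap (RatFunc κ) R (algebraMap κ[X] _ (evalIntPoly κ t p))) :
    IsSeparable (RatFunc κ) (algebraMap B R θ) := by
  obtain ⟨f, hf, hsep⟩ := hθ.exists_separable
  exact hsep.of_dvd (minpoly.dvd _ _ (aeval_algebraMap_map_eq_zero ht hf))

-- If `θ ≠ θ'` were roots of the same `f` with the same image `z`, then `z` would be a double root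
-- of the specialization of `f`.
lemma eq_of_algebraMap_eq [IsDomain B] (hθ : IsFaithfulSpecialization κ F t θ)
    (ht : ∀ p : MvPolynomial (Fin n) κ[X], algebraMap B R (algebraMap _ B p) =
      algebraMap (RatFunc κ) R (algebraMap κ[X] _ (evalIntPoly κ t p))) {θ' : B}
    (hconj : ∀ f : (MvPolynomial (Fin n) κ[X])[X], aeval θ f = 0 → aeval θ' f = 0)
    (hθ' : algebraMap B R θ' = algebraMap B R θ) : θ' = θ := by
  obtain ⟨f, hf, hsep⟩ := hθ.exists_separable
  by_contra hne
  set z := algebraMap B R θ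
  obtain ⟨g, hg⟩ := dvd_iff_isRoot.mpr (show IsRoot (f.map (algebraMap _ B)) θ by
    rwa [IsRoot.def, eval_map_algebraMap])
  have hgθ' : g.eval θ' = 0 := by
    have h := hconj f hf
    rw [← eval_map_algebraMap, hg, eval_mul, eval_sub, eval_X, eval_C] at h
    exact (mul_eq_zero.mp h).resolve_left (sub_ne_zero.mpr hne)
  have hgz : (g.map (algebraMap B R)).IsRoot z := by
    rw [IsRoot.def, ← hθ', eval_map_apply, hgθ', map_zero]
  have hfR : ((f.map (evalIntPoly κ t)).map (algebraMap κ[X] (RatFunc κ))).map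
      (algebraMap (RatFunc κ) R) = (X - C z) * g.map (algebraMap B R) := by
    have h := congrArg (Polynomial.map (algebraMap B R)) hg
    rw [Polynomial.map_mul, Polynomial.map_sub, map_X, map_C, Polynomial.map_map] at h
    rw [← h, Polynomial.map_map, Polynomial.map_map]
    congr 1
    exact RingHom.ext fun p => (ht p).symm
  have hsq := (hsep.map (f := algebraMap (RatFunc κ) R)).squarefree
  rw [hfR] at hsq
  exact not_isUnit_X_sub_C z (hsq _ (mul_dvd_mul_left _ (dvd_iff_isRoot.mpr hgz)))

lemma mem_range_of_mem_adjoin_separableClosure [Algebra κ F] [Algebra κ R] [Algebra F R]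
    [IsScalarTower κ F R] [IsScalarTower κ (RatFunc κ) R] [Algebra.IsAlgebraic κ F] [IsSepClosed F]
    (hθ : IsFaithfulSpecialization κ F t θ)
    (ht : ∀ p : MvPolynomial (Fin n) F[X], algebraMap B R (algebraMap _ B p) =
      aeval (algebraMap (RatFunc κ) R RatFunc.X) (evalIntPoly F t p))
    (h : algebraMap B R θ ∈
      IntermediateField.adjoin (RatFunc κ) (separableClosure κ R : Set R)) :
    θ ∈ (algebraMap (MvPolynomial (Fin n) F[X]) B).range := by
  refine hθ.mem_range_or_rootless.resolve_right ?_
  rintro ⟨g, hg, hgθ, hroot⟩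
  set x := algebraMap (RatFunc κ) R RatFunc.X
  have hgz : eval₂ (aeval (R := F) x).toRingHom (algebraMap B R θ)
      (g.map (evalIntPoly F t)) = 0 := by
    have h := congrArg (algebraMap B R) hgθ
    rw [map_zero, aeval_def, hom_eval₂] at h
    rw [eval₂_map, ← h]
    congr 1
    exact RingHom.ext fun p => (ht p).symm
  obtain ⟨y, hy⟩ := exists_aeval_eq_of_mem_adjoin_separableClosure h ⟨_, hg.map _, hgz⟩
  refine hroot y (injective_aeval_algebraMap_X (κ := κ) (F := F) (R := R) ?_)
  rw [map_zero, ← hgz, ← hy]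
  exact (eval₂_at_apply (aeval (R := F) x).toRingHom y).symm

end IsFaithfulSpecialization

end FaithfulSpecialization

section IntegralGenerators

lemma isFractionRing_of_isLocalization_of_injective {R S K : Type*} [CommRing R] [CommRing S]
    [IsDomain S] [Field K] [Algebra R S] [Algebra S K] [Algebra R K] [IsScalarTower R S K]
    (W : Submonoid R) [IsLocalization W S] [IsFractionRing S K]
    (hinj : Function.Injective (algebraMap R S)) : IsFractionRing R K := by
  have h := IsLocalization.localization_localization_isLocalization_of_has_all_units W
    (nonZeroDivisors S) K fun _ hx => hx.mem_nonZeroDivisors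
  have := hinj.isDomain
  have hcomap : (nonZeroDivisors S).comap (algebraMap R S) = nonZeroDivisors R := by
    ext x
    simp only [Submonoid.mem_comap, mem_nonZeroDivisors_iff_ne_zero, Ne,
      map_eq_zero_iff _ hinj]
  rwa [hcomap] at h

lemma exists_finset_isIntegral_adjoin_eq_top {R S B : Type*} [CommRing R] [CommRing S]
    [CommRing B] [Algebra R S] [Algebra S B] [Algebra R B] [IsScalarTower R S B]
    (W : Submonoid R) [IsLocalization W S] [Algebra.IsIntegral S B] [Algebra.FiniteType S B] :
    ∃ Θ : Finset B, (∀ θ ∈ Θ, IsIntegral R θ) ∧ Algebra.adjoin S (Θ : Set B) = ⊤ := by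
  classical
  obtain ⟨s, hs⟩ := Algebra.FiniteType.out (R := S) (A := B)
  choose m hm using fun x : B =>
    (Algebra.IsIntegral.isIntegral (R := S) x).exists_multiple_integral_of_isLocalization W
  refine ⟨s.image fun x => m x • x, by simpa using fun x _ => hm x, top_le_iff.mp ?_⟩
  rw [← hs, Algebra.adjoin_le_iff]
  intro x hx
  obtain ⟨u, hu⟩ := IsLocalization.map_units S (m x)
  have hx' : x = (↑u⁻¹ : S) • (m x • x) := by
    rw [Submonoid.smul_def, ← IsScalarTower.algebraMap_smul S (m x : R), ← hu, smul_smul,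
      Units.inv_mul, one_smul]
  rw [hx']
  exact Subalgebra.smul_mem _ (Algebra.subset_adjoin
    (Finset.mem_coe.mpr (Finset.mem_image_of_mem (fun x => m x • x) hx))) _

lemma exists_isIntegral_adjoin_simple_eq (R : Type*) {K M : Type*} [CommRing R] [IsDomain R]
    [Field K] [Algebra R K] [IsFractionRing R K] [Field M] [Algebra K M] [Algebra R M]
    [IsScalarTower R K M] [FiniteDimensional K M] [Algebra.IsSeparable K M]
    (S : IntermediateField K M) :
    ∃ θ : M, IsIntegral R θ ∧ IntermediateField.adjoin K {θ} = S := by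
  obtain ⟨x, hx⟩ := Field.exists_primitive_element K S
  have : Algebra.IsAlgebraic R K := IsLocalization.isAlgebraic (R := R) K (nonZeroDivisors R)
  have : Algebra.IsAlgebraic R M := Algebra.IsAlgebraic.trans R K M
  obtain ⟨a, ha, hax⟩ :=
    (Algebra.IsAlgebraic.isAlgebraic (R := R) (x : M)).exists_integral_multiple
  have haK : algebraMap R K a ≠ 0 := by rwa [Ne, map_eq_zero_iff _ (IsFractionRing.injective R K)]
  have hS : IntermediateField.adjoin K {(x : M)} = S := by
    rw [← IntermediateField.lift_adjoin_simple, hx, IntermediateField.lift_top]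
  have hx' : (x : M) = (algebraMap R K a)⁻¹ • (a • (x : M)) := by
    rw [← IsScalarTower.algebraMap_smul K a (x : M), inv_smul_smul₀ haK]
  refine ⟨_, hax, (le_antisymm ?_ ?_).trans hS⟩ <;>
    rw [IntermediateField.adjoin_simple_le_iff]
  · rw [← IsScalarTower.algebraMap_smul K a (x : M)]
    exact (IntermediateField.adjoin K _).smul_mem (IntermediateField.mem_adjoin_simple_self K _)
  · have hmem := (IntermediateField.adjoin K {a • (x : M)}).smul_mem
      (IntermediateField.mem_adjoin_simple_self K _) (x := (algebraMap R K a)⁻¹)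
    rwa [← hx'] at hmem

theorem exists_finset_isIntegral_adjoin_eq_top_and_adjoin_simple_eq (R A K M B : Type*) [CommRing R]
    [IsDomain R] [CommRing A] [IsDomain A] [IsIntegrallyClosed A] [IsNoetherianRing A] [Field K]
    [Field M] [CommRing B]
    [Algebra R A] [Algebra R K] [IsFractionRing R K] [Algebra A K] [IsFractionRing A K]
    [Algebra K M] [Algebra R M] [IsScalarTower R K M] [Algebra A M] [IsScalarTower A K M]
    [Algebra R B] [Algebra A B] [Algebra B M] [IsScalarTower R A B] [IsScalarTower A B M]
    [IsScalarTower R B M] [IsIntegralClosure B A M] [FiniteDimensional K M]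
    [Algebra.IsSeparable K M] (W : Submonoid R) [IsLocalization W A] :
    ∃ Θ : Finset B, (∀ θ ∈ Θ, IsIntegral R θ) ∧ Algebra.adjoin A (Θ : Set B) = ⊤ ∧
      ∀ S : IntermediateField K M,
        ∃ θ ∈ Θ, IntermediateField.adjoin K {algebraMap B M θ} = S := by
  classical
  have := IsIntegralClosure.finite A K M B
  have : Algebra.IsIntegral A B := IsIntegralClosure.isIntegral_algebra A M
  have : IsScalarTower R A M := IsScalarTower.to₁₂₄ R A B M
  have hBM := IsIntegralClosure.algebraMap_injective B A M
  obtain ⟨Θ, hΘ, htop⟩ := exists_finset_isIntegral_adjoin_eq_top (R := R) (S := A) (B := B) W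
  choose η hη using exists_isIntegral_adjoin_simple_eq (K := K) (M := M) R
  choose b hb using fun S => (IsIntegralClosure.isIntegral_iff (A := B)).mp
    ((hη S).1.tower_top (A := A))
  have := Field.finite_intermediateField_of_exists_primitive_element K M
    (Field.exists_primitive_element K M)
  have := Fintype.ofFinite (IntermediateField K M)
  refine ⟨Θ ∪ Finset.univ.image b, fun θ hθ => ?_, top_le_iff.mp ?_, fun S => ⟨b S, by simp, ?_⟩⟩
  · rcases Finset.mem_union.mp hθ with hθ | hθ
    · exact hΘ θ hθ
    · obtain ⟨S, -, rfl⟩ := Finset.mem_image.mp hθ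
      exact (isIntegral_algebraMap_iff hBM).mp ((hb S).symm ▸ (hη S).1)
  · rw [← htop]
    exact Algebra.adjoin_mono (by simp)
  · rw [hb, (hη S).2]

end IntegralGenerators

section HilbertOfFaithful

open IntermediateField Polynomial

lemma isSeparable_of_adjoin_eq_top {A B k N : Type*} [CommRing A] [CommRing B] [Field k] [Field N]
    [Algebra A B] [Algebra A k] [Algebra k N] [Algebra A N] [Algebra B N] [IsScalarTower A k N]
    [IsScalarTower A B N] {Θ : Set B} (hΘ : Algebra.adjoin A Θ = ⊤)
    (hsurj : Function.Surjective (algebraMap B N))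
    (hsep : ∀ θ ∈ Θ, IsSeparable k (algebraMap B N θ)) : Algebra.IsSeparable k N := by
  let s : Subalgebra A B :=
    ((separableClosure k N).toSubalgebra.restrictScalars A).comap (IsScalarTower.toAlgHom A B N)
  have hs : ⊤ ≤ s := hΘ ▸ Algebra.adjoin_le hsep
  refine ⟨fun z => ?_⟩
  obtain ⟨b, rfl⟩ := hsurj z
  exact hs (Algebra.mem_top (x := b))

section Transfer

variable {κ k N R : Type*} [Field κ] [Field k] [Field N] [Field R] [Algebra κ N] [Algebra κ R]
  [Algebra k N] [Algebra k R] [Algebra N R] [IsScalarTower k N R] [IsScalarTower κ N R]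

lemma algebraMap_mem_adjoin_separableClosure {z : N}
    (hz : z ∈ adjoin k (separableClosure κ N : Set N)) :
    algebraMap N R z ∈ adjoin k (separableClosure κ R : Set R) := by
  let i := IsScalarTower.toAlgHom k N R
  have h : i z ∈ (adjoin k (separableClosure κ N : Set N)).map i := ⟨z, hz, rfl⟩
  rw [adjoin_map] at h
  refine adjoin.mono k _ _ ?_ h
  rintro _ ⟨c, hc, rfl⟩
  exact (map_mem_separableClosure_iff (IsScalarTower.toAlgHom κ N R)).mpr hc

lemma mem_adjoin_inter_separableClosure_of_algebraMap_mem [Algebra κ k] [IsScalarTower κ k R]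
    [IsAlgClosed R] {S : IntermediateField k N} {z : N} (hzS : z ∈ S)
    (hz : algebraMap N R z ∈ adjoin k (separableClosure κ R : Set R)) :
    z ∈ adjoin k (S ∩ separableClosure κ N : Set N) := by
  let i := IsScalarTower.toAlgHom k N R
  have himage : ((S.map i : Set R) ∩ separableClosure κ R : Set R) ⊆
      i '' (S ∩ separableClosure κ N : Set N) := by
    rintro _ ⟨⟨c, hc, rfl⟩, hcR⟩
    exact ⟨c, ⟨hc, (map_mem_separableClosure_iff (IsScalarTower.toAlgHom κ N R)).mp hcR⟩, rfl⟩
  have h : i z ∈ adjoin k (i '' (S ∩ separableClosure κ N : Set N)) :=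
    adjoin.mono k _ _ himage (mem_adjoin_inter_separableClosure (S := S.map i) ⟨z, hzS, rfl⟩ hz)
  rw [← adjoin_map] at h
  obtain ⟨z', hz', h'⟩ := h
  rwa [← i.injective h']

end Transfer

variable {κ F A K M B Ω D N R : Type*} [Field κ] [Field F] {n : ℕ} {t : Fin n → ℤ[X]}
  [CommRing A] [CommRing B] [CommRing D] [Field N] [Field R]
  [Algebra A B] [Algebra B D] [Algebra B N] [Algebra N R] [Algebra D R] [Algebra B R]
  [IsScalarTower B N R] [IsScalarTower B D R]
  [Algebra (MvPolynomial (Fin n) κ[X]) D] [Algebra (MvPolynomial (Fin n) F[X]) D]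
  [Algebra (RatFunc κ) R] {Θ : Finset B}

lemma galRestrict_eq_one_of_isFaithfulSpecialization [Algebra (MvPolynomial (Fin n) κ[X]) A]
    [Algebra (MvPolynomial (Fin n) κ[X]) B] [IsScalarTower (MvPolynomial (Fin n) κ[X]) A B]
    [IsScalarTower (MvPolynomial (Fin n) κ[X]) B D] [IsDomain A] [IsIntegrallyClosed A] [Field K]
    [Algebra A K] [IsFractionRing A K] [Field M] [Algebra K M] [Algebra A M] [IsScalarTower A K M]
    [FiniteDimensional K M] [Algebra B M] [IsScalarTower A B M] [IsIntegralClosure B A M]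
    [IsDomain D] [FaithfulSMul B D]
    {θ : B} (hθ : IsFaithfulSpecialization κ F t (algebraMap B D θ))
    (htop : adjoin K {algebraMap B M θ} = ⊤)
    (ht : ∀ p : MvPolynomial (Fin n) κ[X], algebraMap D R (algebraMap _ D p) =
      algebraMap (RatFunc κ) R (algebraMap κ[X] _ (evalIntPoly κ t p)))
    {γ : M ≃ₐ[K] M} (hγ : algebraMap B N (galRestrict A K M B γ θ) = algebraMap B N θ) :
    γ = 1 := by
  let γB : B →ₐ[MvPolynomial (Fin n) κ[X]] B :=
    (galRestrict A K M B γ : B →ₐ[A] B).restrictScalars (MvPolynomial (Fin n) κ[X])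
  have hD : algebraMap B D (γB θ) = algebraMap B D θ := by
    refine hθ.eq_of_algebraMap_eq ht (fun f hf => ?_) ?_
    · rw [aeval_algebraMap_apply, (FaithfulSMul.algebraMap_injective B D).eq_iff' (map_zero _)]
        at hf
      rw [aeval_algebraMap_apply, aeval_algHom_apply, hf, map_zero, map_zero]
    · simp only [← IsScalarTower.algebraMap_apply B D R, IsScalarTower.algebraMap_apply B N R]
      exact congrArg _ hγ
  have hθγ : γ (algebraMap B M θ) = algebraMap B M θ := by
    rw [← algebraMap_galRestrict_apply A]
    exact congrArg _ (FaithfulSMul.algebraMap_injective B D hD)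
  have hmem : γ ∈ (adjoin K {algebraMap B M θ}).fixingSubgroup :=
    mem_fixingSubgroup_adjoin_iff.mpr (by simpa using hθγ)
  rwa [htop, fixingSubgroup_top, Subgroup.mem_bot] at hmem

lemma le_adjoin_of_isFaithfulSpecialization [Algebra κ F] [Algebra κ R] [Algebra κ N] [Algebra F R]
    [IsScalarTower κ F R] [IsScalarTower κ (RatFunc κ) R] [Algebra.IsAlgebraic κ F] [IsSepClosed F]
    [Algebra (RatFunc κ) N] [IsScalarTower (RatFunc κ) N R] [IsScalarTower κ N R]
    [Field K] [Field M] [Field Ω] [IsAlgClosed Ω] [Algebra K M] [Algebra K Ω] [Algebra M Ω]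
    [IsScalarTower K M Ω] [Algebra κ K] [Algebra κ M] [Algebra κ Ω] [IsScalarTower κ K Ω]
    [IsScalarTower κ M Ω] [Algebra B M] [Algebra B Ω] [Algebra D Ω] [IsScalarTower B M Ω]
    [IsScalarTower B D Ω]
    {θ : B} (hθ : IsFaithfulSpecialization κ F t (algebraMap B D θ))
    (ht : ∀ p : MvPolynomial (Fin n) F[X], algebraMap D R (algebraMap _ D p) =
      aeval (algebraMap (RatFunc κ) R RatFunc.X) (evalIntPoly F t p))
    (hF : ∀ p : MvPolynomial (Fin n) F[X], algebraMap D Ω (algebraMap _ D p) ∈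
      adjoin K (separableClosure κ Ω : Set Ω)) {S : IntermediateField K M}
    (hS : adjoin K {algebraMap B M θ} = S)
    (h : algebraMap B N θ ∈ adjoin (RatFunc κ) (separableClosure κ N : Set N)) :
    S ≤ adjoin K (S ∩ separableClosure κ M : Set M) := by
  have hR := algebraMap_mem_adjoin_separableClosure (R := R) h
  rw [← IsScalarTower.algebraMap_apply, IsScalarTower.algebraMap_apply B D R] at hR
  obtain ⟨p, hp⟩ := hθ.mem_range_of_mem_adjoin_separableClosure ht hR
  have hΩ : algebraMap M Ω (algebraMap B M θ) ∈ adjoin K (separableClosure κ Ω : Set Ω) := by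
    rw [← IsScalarTower.algebraMap_apply, IsScalarTower.algebraMap_apply B D Ω, ← hp]
    exact hF p
  have hθS : algebraMap B M θ ∈ S := hS ▸ mem_adjoin_simple_self K _
  have hmem := mem_adjoin_inter_separableClosure_of_algebraMap_mem hθS hΩ
  rwa [← adjoin_simple_le_iff, hS] at hmem

end HilbertOfFaithful

section HilbertAssembly

open IntermediateField Polynomial

theorem isHilbertSpecialization_of_isFaithfulSpecialization {κ F A K M B Ω D N R : Type*}
    [Field κ] [Field F] {n : ℕ} {t : Fin n → ℤ[X]} [CommRing A] [IsDomain A] [IsIntegrallyClosed A]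
    [Field K] [Algebra A K] [IsFractionRing A K] [Field M] [Algebra K M] [Algebra A M]
    [IsScalarTower A K M] [FiniteDimensional K M] [IsGalois K M]
    [CommRing B] [Algebra A B] [Algebra B M] [IsScalarTower A B M] [IsIntegralClosure B A M]
    [Field Ω] [IsAlgClosed Ω] [Algebra K Ω] [Algebra M Ω] [IsScalarTower K M Ω] [Algebra κ K]
    [Algebra κ M] [Algebra κ Ω] [IsScalarTower κ K Ω] [IsScalarTower κ M Ω]
    [CommRing D] [IsDomain D] [Algebra B D] [FaithfulSMul B D] [Algebra B Ω] [Algebra D Ω]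
    [IsScalarTower B M Ω] [IsScalarTower B D Ω]
    [Algebra (MvPolynomial (Fin n) κ[X]) A] [Algebra (MvPolynomial (Fin n) κ[X]) B]
    [Algebra (MvPolynomial (Fin n) κ[X]) D] [Algebra (MvPolynomial (Fin n) F[X]) D]
    [IsScalarTower (MvPolynomial (Fin n) κ[X]) A B] [IsScalarTower (MvPolynomial (Fin n) κ[X]) B D]
    [Field N] [Field R] [Algebra A (RatFunc κ)] [Algebra (RatFunc κ) N] [Algebra A N] [Algebra B N]
    [IsScalarTower A (RatFunc κ) N] [IsScalarTower A B N] [Algebra N R] [Algebra D R] [Algebra B R]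
    [IsScalarTower B N R] [IsScalarTower B D R] [Algebra (RatFunc κ) R]
    [IsScalarTower (RatFunc κ) N R] [Algebra κ F] [Algebra κ R] [Algebra κ N] [Algebra F R]
    [IsScalarTower κ F R] [IsScalarTower κ (RatFunc κ) R] [IsScalarTower κ N R]
    [Algebra.IsAlgebraic κ F] [IsSepClosed F] {Θ : Finset B}
    (hΘ : ∀ θ ∈ Θ, IsFaithfulSpecialization κ F t (algebraMap B D θ))
    (htop : Algebra.adjoin A (Θ : Set B) = ⊤)
    (hprim : ∀ S : IntermediateField K M, ∃ θ ∈ Θ, adjoin K {algebraMap B M θ} = S)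
    (hk : Function.Surjective (algebraMap A (RatFunc κ)))
    (hN : Function.Surjective (algebraMap B N))
    (ht : ∀ p : MvPolynomial (Fin n) κ[X], algebraMap D R (algebraMap _ D p) =
      algebraMap (RatFunc κ) R (algebraMap κ[X] _ (evalIntPoly κ t p)))
    (htF : ∀ p : MvPolynomial (Fin n) F[X], algebraMap D R (algebraMap _ D p) =
      aeval (algebraMap (RatFunc κ) R RatFunc.X) (evalIntPoly F t p))
    (hF : ∀ p : MvPolynomial (Fin n) F[X], algebraMap D Ω (algebraMap _ D p) ∈
      adjoin K (separableClosure κ Ω : Set Ω)) :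
    IsHilbertSpecialization κ A K M B (RatFunc κ) N where
  surjective_base := hk
  surjective := hN
  isSeparable := isSeparable_of_adjoin_eq_top htop hN fun θ hθ => by
    refine IsSeparable.of_algHom (IsScalarTower.toAlgHom (RatFunc κ) N R) ?_
    rw [IsScalarTower.coe_toAlgHom', ← IsScalarTower.algebraMap_apply B N R,
      IsScalarTower.algebraMap_apply B D R]
    exact (hΘ θ hθ).isSeparable ht
  eq_one_of_inertia γ hγ := by
    obtain ⟨θ, hθ, hθtop⟩ := hprim ⊤
    exact galRestrict_eq_one_of_isFaithfulSpecialization (R := R) (hΘ θ hθ) hθtop ht (hγ θ)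
  le_adjoin S hS := by
    obtain ⟨θ, hθ, rfl⟩ := hprim S
    exact le_adjoin_of_isFaithfulSpecialization (hΘ θ hθ) htF hF rfl
      (hS θ (mem_adjoin_simple_self K _))

end HilbertAssembly

section ExtendedConstants

open IntermediateField Polynomial

variable {κ F : Type*} [Field κ] [Field F] {n : ℕ}

/-- The point of `κ(T)ⁿ` given by a tuple of integral polynomials in `T`. -/
noncomputable abbrev intPolyPoint (κ : Type*) [Field κ] (t : Fin n → ℤ[X]) : Fin n → RatFunc κ :=
  fun i => algebraMap κ[X] (RatFunc κ) ((t i).map (Int.castRingHom κ))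

lemma eval_intPolyPoint_map (t : Fin n → ℤ[X]) (p : MvPolynomial (Fin n) κ[X]) :
    MvPolynomial.eval (intPolyPoint κ t) (MvPolynomial.map (algebraMap κ[X] (RatFunc κ)) p) =
      algebraMap κ[X] (RatFunc κ) (evalIntPoly κ t p) := by
  have h : (MvPolynomial.eval (intPolyPoint κ t)).comp
        (MvPolynomial.map (algebraMap κ[X] (RatFunc κ))) =
      (algebraMap κ[X] (RatFunc κ)).comp (evalIntPoly κ t) := by
    ext i <;> simp
  exact congrArg (fun f => f p) h

lemma algebraMap_intPolyPoint {R : Type*} [Field R] [Algebra (RatFunc κ) R] [Algebra F R]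
    (t : Fin n → ℤ[X]) (i : Fin n) : algebraMap (RatFunc κ) R (intPolyPoint κ t i) =
      aeval (algebraMap (RatFunc κ) R RatFunc.X) ((t i).map (Int.castRingHom F)) := by
  have h : (algebraMap (RatFunc κ) R).comp
        ((algebraMap κ[X] (RatFunc κ)).comp (mapRingHom (Int.castRingHom κ))) =
      (aeval (R := F) (algebraMap (RatFunc κ) R RatFunc.X)).toRingHom.comp
        (mapRingHom (Int.castRingHom F)) := by
    refine ringHom_ext' (RingHom.ext_int _ _) ?_
    simp [RingHom.comp_apply]
  exact congrArg (fun f => f (t i)) h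

variable {D : Type*} [CommRing D] [Algebra (MvPolynomial (Fin n) (RatFunc κ)) D] [Algebra F D]

/-- The substitution `F[T][X₁, …, Xₙ] → D` which extends the `κ(T)[X₁, …, Xₙ]`-algebra structure of
`D` along an enlargement `F` of the constants `κ`. -/
noncomputable def extendedConstantsHom : MvPolynomial (Fin n) F[X] →+* D :=
  MvPolynomial.eval₂Hom
    (eval₂RingHom (algebraMap F D)
      (algebraMap (MvPolynomial (Fin n) (RatFunc κ)) D (MvPolynomial.C RatFunc.X)))
    fun i => algebraMap (MvPolynomial (Fin n) (RatFunc κ)) D (MvPolynomial.X i)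

lemma extendedConstantsHom_map [Algebra κ F] [Algebra κ D] [IsScalarTower κ F D]
    [IsScalarTower κ (MvPolynomial (Fin n) (RatFunc κ)) D] (p : MvPolynomial (Fin n) κ[X]) :
    extendedConstantsHom (κ := κ) (D := D) (MvPolynomial.map (mapRingHom (algebraMap κ F)) p) =
      algebraMap (MvPolynomial (Fin n) (RatFunc κ)) D
        (MvPolynomial.map (algebraMap κ[X] (RatFunc κ)) p) := by
  have h : (extendedConstantsHom (κ := κ) (D := D)).comp
        (MvPolynomial.map (mapRingHom (algebraMap κ F))) =
      (algebraMap (MvPolynomial (Fin n) (RatFunc κ)) D).comp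
        (MvPolynomial.map (algebraMap κ[X] (RatFunc κ))) := by
    have hC : ∀ c : κ, algebraMap κ D c =
        algebraMap (MvPolynomial (Fin n) (RatFunc κ)) D (MvPolynomial.C (RatFunc.C c)) :=
      IsScalarTower.algebraMap_apply κ (MvPolynomial (Fin n) (RatFunc κ)) D
    ext i <;> simp [extendedConstantsHom, ← IsScalarTower.algebraMap_apply κ F D, hC]
  exact congrArg (fun f => f p) h

lemma algebraMap_extendedConstantsHom {R : Type*} [Field R] [Algebra D R] [Algebra F R]
    [IsScalarTower F D R] [Algebra (RatFunc κ) R] {t : Fin n → ℤ[X]}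
    (hR : ∀ p, algebraMap D R (algebraMap (MvPolynomial (Fin n) (RatFunc κ)) D p) =
      algebraMap (RatFunc κ) R (MvPolynomial.eval (intPolyPoint κ t) p))
    (p : MvPolynomial (Fin n) F[X]) :
    algebraMap D R (extendedConstantsHom (κ := κ) p) =
      aeval (algebraMap (RatFunc κ) R RatFunc.X) (evalIntPoly F t p) := by
  have h : (algebraMap D R).comp (extendedConstantsHom (κ := κ)) =
      (aeval (R := F) (algebraMap (RatFunc κ) R RatFunc.X)).toRingHom.comp (evalIntPoly F t) := by
    ext i
    · simp [extendedConstantsHom, ← IsScalarTower.algebraMap_apply F D R]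
    · simp [extendedConstantsHom, hR]
    · simpa [extendedConstantsHom, hR] using algebraMap_intPolyPoint t i
  exact congrArg (fun f => f p) h

lemma algebraMap_extendedConstantsHom_mem {K Ω : Type*} [Field K] [Field Ω]
    [Algebra (MvPolynomial (Fin n) (RatFunc κ)) K] [Algebra K Ω] [Algebra D Ω]
    [Algebra (MvPolynomial (Fin n) (RatFunc κ)) Ω]
    [IsScalarTower (MvPolynomial (Fin n) (RatFunc κ)) K Ω]
    [IsScalarTower (MvPolynomial (Fin n) (RatFunc κ)) D Ω]
    [Algebra F Ω] [IsScalarTower F D Ω] {S : Set Ω} (hS : ∀ c, algebraMap F Ω c ∈ S)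
    (p : MvPolynomial (Fin n) F[X]) :
    algebraMap D Ω (extendedConstantsHom (κ := κ) p) ∈ adjoin K S := by
  have hA : ∀ a, algebraMap D Ω (algebraMap (MvPolynomial (Fin n) (RatFunc κ)) D a) ∈ adjoin K S :=
    fun a => by
      rw [← IsScalarTower.algebraMap_apply, IsScalarTower.algebraMap_apply _ K Ω]
      exact (adjoin K S).algebraMap_mem _
  induction p using MvPolynomial.induction_on with
  | C q =>
    induction q using Polynomial.induction_on' with
    | add q r hq hr => simpa only [map_add] using add_mem hq hr
    | monomial m c =>
      have hmem := mul_mem (subset_adjoin K S (hS c)) (pow_mem (hA (MvPolynomial.C RatFunc.X)) m)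
      simpa [extendedConstantsHom, ← IsScalarTower.algebraMap_apply F D Ω] using hmem
  | add p q hp hq => simpa only [map_add] using add_mem hp hq
  | mul_X p i hp =>
    rw [map_mul, map_mul]
    exact mul_mem hp (by simpa [extendedConstantsHom] using hA (MvPolynomial.X i))

end ExtendedConstants

section FaithfulGenerators

open IntermediateField Polynomial

lemma exists_monic_aeval_eq_zero_and_separable_map {R : Type*} (K : Type*) {M B D : Type*}
    [CommRing R] [IsDomain R] [IsIntegrallyClosed R] [Field K] [Algebra R K] [IsFractionRing R K]
    [Field M] [Algebra K M] [Algebra.IsSeparable K M] [Algebra R M] [IsScalarTower R K M]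
    [CommRing B] [Algebra R B] [Algebra B M] [IsScalarTower R B M]
    (hBM : Function.Injective (algebraMap B M)) [CommRing D] [Algebra R D] [Algebra B D]
    [IsScalarTower R B D] {θ : B} (hθ : IsIntegral R θ) :
    ∃ f : R[X], f.Monic ∧ aeval (algebraMap B D θ) f = 0 ∧ (f.map (algebraMap R K)).Separable := by
  have hint : IsIntegral R (algebraMap B M θ) := hθ.map (IsScalarTower.toAlgHom R B M)
  refine ⟨minpoly R (algebraMap B M θ), minpoly.monic hint, ?_, ?_⟩
  · have hroot := minpoly.aeval R (algebraMap B M θ)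
    rw [aeval_algebraMap_apply, map_eq_zero_iff _ hBM] at hroot
    rw [aeval_algebraMap_apply, hroot, map_zero]
  · rw [← minpoly.isIntegrallyClosed_eq_field_fractions' K hint]
    exact Algebra.IsSeparable.isSeparable K _

theorem exists_isFaithfulSpecialization_and_adjoin_eq_top {κ F : Type*} [Field κ] [Field F]
    {n : ℕ} (A K M B D : Type*) [CommRing A] [IsDomain A] [IsIntegrallyClosed A]
    [IsNoetherianRing A] [Field K] [Algebra A K] [IsFractionRing A K] [Field M] [Algebra K M]
    [Algebra A M] [IsScalarTower A K M] [FiniteDimensional K M] [Algebra.IsSeparable K M]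
    [CommRing B] [Algebra A B] [Algebra B M] [IsScalarTower A B M] [IsIntegralClosure B A M]
    [CommRing D] [IsDomain D] [Algebra B D] [Algebra (MvPolynomial (Fin n) κ[X]) A]
    [FaithfulSMul (MvPolynomial (Fin n) κ[X]) A] [Algebra (MvPolynomial (Fin n) κ[X]) B]
    [IsScalarTower (MvPolynomial (Fin n) κ[X]) A B] [Algebra (MvPolynomial (Fin n) κ[X]) D]
    [IsScalarTower (MvPolynomial (Fin n) κ[X]) B D] [Algebra (MvPolynomial (Fin n) F[X]) D]
    (W : Submonoid (MvPolynomial (Fin n) κ[X])) [IsLocalization W A] (φ : κ →+* F)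
    (hφ : ∀ p : MvPolynomial (Fin n) κ[X],
      algebraMap _ D (MvPolynomial.map (mapRingHom φ) p) = algebraMap _ D p) :
    ∃ (t : Fin n → ℤ[X]) (Θ : Finset B),
      (∀ θ ∈ Θ, IsFaithfulSpecialization κ F t (algebraMap B D θ)) ∧
      Algebra.adjoin A (Θ : Set B) = ⊤ ∧
      ∀ S : IntermediateField K M, ∃ θ ∈ Θ, adjoin K {algebraMap B M θ} = S := by
  classical
  algebraize [(algebraMap A K).comp (algebraMap (MvPolynomial (Fin n) κ[X]) A),
    (algebraMap A M).comp (algebraMap (MvPolynomial (Fin n) κ[X]) A)]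
  have : IsFractionRing (MvPolynomial (Fin n) κ[X]) K :=
    isFractionRing_of_isLocalization_of_injective (S := A) W (FaithfulSMul.algebraMap_injective _ A)
  have : IsScalarTower (MvPolynomial (Fin n) κ[X]) K M := .of_algebraMap_eq fun p => by
    rw [IsScalarTower.algebraMap_apply _ A M, IsScalarTower.algebraMap_apply A K M,
      IsScalarTower.algebraMap_apply (MvPolynomial (Fin n) κ[X]) A K]
  have : IsScalarTower (MvPolynomial (Fin n) κ[X]) B M := .of_algebraMap_eq fun p => by
    rw [IsScalarTower.algebraMap_apply _ A M, IsScalarTower.algebraMap_apply A B M,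
      IsScalarTower.algebraMap_apply (MvPolynomial (Fin n) κ[X]) A B]
  obtain ⟨Θ, hint, htop, hprim⟩ :=
    exists_finset_isIntegral_adjoin_eq_top_and_adjoin_simple_eq (MvPolynomial (Fin n) κ[X])
      A K M B W
  obtain ⟨t, ht⟩ := exists_isFaithfulSpecialization K φ hφ (Θ.image (algebraMap B D))
    (Finset.forall_mem_image.mpr fun θ hθ => exists_monic_aeval_eq_zero_and_separable_map K
      (IsIntegralClosure.algebraMap_injective B A M) (hint θ hθ))
  exact ⟨t, Θ, Finset.forall_mem_image.mp ht, htop, hprim⟩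

end FaithfulGenerators

section RationalPoint

open IntermediateField

lemma ker_eval_eq_span {k : Type*} [CommRing k] {σ : Type*} (t : σ → k) :
    RingHom.ker (MvPolynomial.eval t) =
      Ideal.span (Set.range fun i => MvPolynomial.X i - MvPolynomial.C (t i)) := by
  refine le_antisymm (fun p hp => ?_) (Ideal.span_le.mpr ?_)
  · set I : Ideal (MvPolynomial σ k) := Ideal.span _
    have hmk : Ideal.Quotient.mk I =
        ((Ideal.Quotient.mk I).comp MvPolynomial.C).comp (MvPolynomial.eval t) := by
      refine MvPolynomial.ringHom_ext (fun r => by simp) fun i => ?_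
      have hX : MvPolynomial.X i - MvPolynomial.C (t i) ∈ I := Ideal.subset_span ⟨i, rfl⟩
      simpa using Ideal.Quotient.eq.mpr hX
    rw [← Ideal.Quotient.eq_zero_iff_mem, hmk, RingHom.comp_apply, RingHom.mem_ker.mp hp, map_zero]
  · rintro _ ⟨i, rfl⟩
    simp [RingHom.mem_ker]

lemma algebraicClosure_ratFunc_eq_bot (κ : Type*) [Field κ] :
    algebraicClosure κ (RatFunc κ) = ⊥ := by
  refine le_bot_iff.mp fun f hf => ?_
  by_contra hconst
  have hC : ¬ ∃ c, f = RatFunc.C c := fun ⟨c, hc⟩ =>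
    hconst (hc ▸ IntermediateField.algebraMap_mem ⊥ c)
  have := isAlgebraic_adjoin_simple (mem_algebraicClosure_iff'.mp hf)
  have := RatFunc.isAlgebraic_adjoin_simple_X' f hC
  exact RatFunc.transcendental_X
    ((Algebra.IsAlgebraic.trans κ κ⟮f⟯ (RatFunc κ)).isAlgebraic RatFunc.X)

lemma isScalarTower_quotient_of_ker_le {A B k : Type*} [CommRing A] [CommRing B] [CommRing k]
    [Algebra k A] [Algebra A B] [Algebra k B] [IsScalarTower k A B] [Algebra A k]
    [IsScalarTower k A k] {I : Ideal B} (hI : RingHom.ker (algebraMap A k) ≤ I.under A) :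
    IsScalarTower A k (B ⧸ I) := by
  refine .of_algebraMap_eq fun a => ?_
  have hmem : a - algebraMap k A (algebraMap A k a) ∈ I.under A := hI <| by
    rw [RingHom.mem_ker, map_sub, ← IsScalarTower.algebraMap_apply k A k, Algebra.algebraMap_self,
      RingHom.id_apply, sub_self]
  rw [Ideal.mem_comap, map_sub, ← IsScalarTower.algebraMap_apply] at hmem
  exact Ideal.Quotient.eq.mpr hmem

universe u in
lemma exists_isGalois_of_isSeparable (K : Type*) (E : Type u) [Field K] [Field E] [Algebra K E]
    [FiniteDimensional K E] [Algebra.IsSeparable K E] :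
    ∃ (M : Type u) (_ : Field M) (_ : Algebra K M) (_ : Algebra E M),
      IsScalarTower K E M ∧ FiniteDimensional K M ∧ IsGalois K M := by
  have : IsAlgClosure K (AlgebraicClosure E) :=
    ⟨inferInstance, Algebra.IsAlgebraic.trans K E (AlgebraicClosure E)⟩
  have : Normal K (AlgebraicClosure E) := IsAlgClosure.normal K _
  have hsep : normalClosure K E (AlgebraicClosure E) ≤ separableClosure K (AlgebraicClosure E) := by
    rw [normalClosure_le_iff]
    rintro f _ ⟨x, rfl⟩
    exact mem_separableClosure_iff.mpr ((Algebra.IsSeparable.isSeparable K x).map f f.injective)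
  have := (le_separableClosure_iff K _ _).mp hsep
  exact ⟨normalClosure K E (AlgebraicClosure E), inferInstance, inferInstance,
    normalClosure.algebra K E _, inferInstance, normalClosure.is_finiteDimensional K E _,
    IsGalois.mk⟩

end RationalPoint

section HilbertPoint

open IntermediateField Polynomial

variable {κ F : Type*} [Field κ] [Field F] {n : ℕ} (K M B D Ω : Type*)
  [Field K] [Algebra (MvPolynomial (Fin n) (RatFunc κ)) K]
  [IsFractionRing (MvPolynomial (Fin n) (RatFunc κ)) K] [Algebra κ K]
  [Field M] [Algebra K M] [FiniteDimensional K M] [IsGalois K M]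
  [Algebra (MvPolynomial (Fin n) (RatFunc κ)) M] [Algebra κ M]
  [IsScalarTower (MvPolynomial (Fin n) (RatFunc κ)) K M]
  [CommRing B] [Algebra (MvPolynomial (Fin n) (RatFunc κ)) B] [Algebra B M]
  [IsScalarTower (MvPolynomial (Fin n) (RatFunc κ)) B M]
  [IsIntegralClosure B (MvPolynomial (Fin n) (RatFunc κ)) M] [Algebra (RatFunc κ) B]
  [IsScalarTower (RatFunc κ) (MvPolynomial (Fin n) (RatFunc κ)) B] [Algebra κ B]
  [IsScalarTower κ (RatFunc κ) B]

attribute [local instance] MvPolynomial.algebraMvPolynomial in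
theorem exists_isHilbertSpecialization_of_isSepClosed [Algebra κ F] [Algebra.IsAlgebraic κ F]
    [IsSepClosed F] [CommRing D] [IsDomain D] [Algebra B D] [FaithfulSMul B D]
    [Algebra (MvPolynomial (Fin n) (RatFunc κ)) D]
    [IsScalarTower (MvPolynomial (Fin n) (RatFunc κ)) B D]
    [Algebra.IsIntegral B D] [Algebra.IsIntegral (MvPolynomial (Fin n) (RatFunc κ)) D]
    [FaithfulSMul (MvPolynomial (Fin n) (RatFunc κ)) D]
    [Algebra F D] [Algebra κ D] [IsScalarTower κ F D] [Algebra (RatFunc κ) D]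
    [IsScalarTower κ (RatFunc κ) D]
    [IsScalarTower (RatFunc κ) (MvPolynomial (Fin n) (RatFunc κ)) D] [IsScalarTower (RatFunc κ) B D]
    [Field Ω] [IsAlgClosed Ω] [Algebra K Ω] [Algebra M Ω] [IsScalarTower K M Ω] [Algebra κ Ω]
    [IsScalarTower κ K Ω] [IsScalarTower κ M Ω] [Algebra B Ω] [Algebra D Ω] [IsScalarTower B M Ω]
    [IsScalarTower B D Ω] [Algebra F Ω] [IsScalarTower F D Ω] [IsScalarTower κ F Ω]
    [Algebra (MvPolynomial (Fin n) (RatFunc κ)) Ω]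
    [IsScalarTower (MvPolynomial (Fin n) (RatFunc κ)) K Ω]
    [IsScalarTower (MvPolynomial (Fin n) (RatFunc κ)) D Ω]
    (hF : ∀ c, algebraMap F Ω c ∈ separableClosure κ Ω) :
    ∃ (t : Fin n → RatFunc κ) (Q : Ideal B) (_ : Q.IsMaximal),
      Q.LiesOver (RingHom.ker (MvPolynomial.eval t)) ∧
      letI := (MvPolynomial.eval t).toAlgebra
      letI := Ideal.Quotient.field Q
      IsHilbertSpecialization κ (MvPolynomial (Fin n) (RatFunc κ)) K M B (RatFunc κ) (B ⧸ Q) := by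
  let A := MvPolynomial (Fin n) (RatFunc κ)
  have : IsScalarTower κ A D := .to₁₃₄ κ (RatFunc κ) A D
  algebraize [(algebraMap A B).comp (algebraMap (MvPolynomial (Fin n) κ[X]) A)]
  algebraize [(algebraMap B D).comp (algebraMap (MvPolynomial (Fin n) κ[X]) B)]
  let : Algebra (MvPolynomial (Fin n) F[X]) D := (extendedConstantsHom (κ := κ)).toAlgebra
  obtain ⟨t, Θ, hΘ, htop, hprim⟩ := exists_isFaithfulSpecialization_and_adjoin_eq_top (F := F)
    A K M B D ((nonZeroDivisors κ[X]).map MvPolynomial.C) (algebraMap κ F) fun p =>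
      (extendedConstantsHom_map p).trans (IsScalarTower.algebraMap_apply A B D _)
  let : Algebra A (RatFunc κ) := (MvPolynomial.eval (intPolyPoint κ t)).toAlgebra
  have : IsScalarTower (RatFunc κ) A (RatFunc κ) := .of_algebraMap_eq fun c =>
    (MvPolynomial.eval_C c).symm
  have hsurj : Function.Surjective (algebraMap A (RatFunc κ)) := fun c =>
    ⟨MvPolynomial.C c, MvPolynomial.eval_C c⟩
  let 𝔪 := RingHom.ker (algebraMap A (RatFunc κ))
  have : 𝔪.IsMaximal := RingHom.ker_isMaximal_of_surjective _ hsurj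
  have : IsScalarTower κ B D := .to₁₃₄ κ (RatFunc κ) B D
  obtain ⟨𝔔, _, h𝔔⟩ := Ideal.exists_maximal_ideal_liesOver_of_isIntegral 𝔪 (S := D)
  have : (𝔔.under B).IsMaximal := Ideal.isMaximal_comap_of_isIntegral_of_isMaximal 𝔔
  have : (𝔔.under B).LiesOver 𝔪 := ⟨by rw [Ideal.under_under, h𝔔.over]⟩
  let := Ideal.Quotient.field 𝔔
  let := Ideal.Quotient.field (𝔔.under B)
  have : IsScalarTower A (RatFunc κ) (B ⧸ 𝔔.under B) :=
    isScalarTower_quotient_of_ker_le Ideal.LiesOver.over.le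
  have : IsScalarTower A (RatFunc κ) (D ⧸ 𝔔) :=
    isScalarTower_quotient_of_ker_le Ideal.LiesOver.over.le
  have hR : ∀ p, algebraMap D (D ⧸ 𝔔) (algebraMap A D p) =
      algebraMap (RatFunc κ) (D ⧸ 𝔔) (MvPolynomial.eval (intPolyPoint κ t) p) := fun p => by
    rw [← IsScalarTower.algebraMap_apply, IsScalarTower.algebraMap_apply A (RatFunc κ)]
    rfl
  refine ⟨intPolyPoint κ t, 𝔔.under B, inferInstance, ‹(𝔔.under B).LiesOver 𝔪›, ?_⟩
  refine isHilbertSpecialization_of_isFaithfulSpecialization (Ω := Ω) (R := D ⧸ 𝔔) hΘ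
    htop hprim hsurj Ideal.Quotient.mk_surjective (fun p => ?_) (fun p => ?_) (fun p => ?_)
  · rw [IsScalarTower.algebraMap_apply _ B D, IsScalarTower.algebraMap_apply _ A B,
      ← IsScalarTower.algebraMap_apply A B D, hR, ← eval_intPolyPoint_map]
    rfl
  · exact algebraMap_extendedConstantsHom hR p
  · exact algebraMap_extendedConstantsHom_mem hF p

theorem exists_isHilbertSpecialization [IsScalarTower κ K M] [IsScalarTower κ B M]
    [Algebra (RatFunc κ) M] [IsScalarTower (RatFunc κ) B M] [IsScalarTower κ (RatFunc κ) M] :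
    ∃ (t : Fin n → RatFunc κ) (Q : Ideal B) (_ : Q.IsMaximal),
      Q.LiesOver (RingHom.ker (MvPolynomial.eval t)) ∧
      letI := (MvPolynomial.eval t).toAlgebra
      letI := Ideal.Quotient.field Q
      IsHilbertSpecialization κ (MvPolynomial (Fin n) (RatFunc κ)) K M B (RatFunc κ) (B ⧸ Q) := by
  let A := MvPolynomial (Fin n) (RatFunc κ)
  let Ω := AlgebraicClosure M
  let D := integralClosure B Ω
  let F := separableClosure κ Ω
  let : Algebra F D := ((algebraMap F Ω).codRestrict D fun c =>
    (mem_separableClosure_iff.mp c.2).isIntegral.tower_top).toAlgebra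
  have : IsScalarTower F D Ω := .of_algebraMap_eq fun c => rfl
  have : IsScalarTower κ F D := .of_algebraMap_eq fun c => rfl
  have : FaithfulSMul A M := .trans A K M
  have : FaithfulSMul A B := .tower_bot A B M
  have : FaithfulSMul B M :=
    (faithfulSMul_iff_algebraMap_injective B M).mpr (IsIntegralClosure.algebraMap_injective B A M)
  have : FaithfulSMul B Ω := .trans B M Ω
  have : FaithfulSMul B D := .tower_bot B D Ω
  have : FaithfulSMul A D := .trans A B D
  have : Algebra.IsIntegral A B := IsIntegralClosure.isIntegral_algebra A M
  have : Algebra.IsIntegral A D := .trans B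
  have : IsScalarTower (RatFunc κ) A D := .to₁₂₄ (RatFunc κ) A B D
  have : IsSepClosed F := (separableClosure.isSepClosure κ Ω).sep_closed
  exact exists_isHilbertSpecialization_of_isSepClosed (F := F) K M B D Ω fun c => c.2

end HilbertPoint

section ResidueField

lemma isIntegralClosure_integralClosure (A C M : Type*) [CommRing A] [CommRing C] [CommRing M]
    [Algebra A C] [Algebra A M] [Algebra C M] [IsScalarTower A C M] [Algebra.IsIntegral A C] :
    IsIntegralClosure (integralClosure C M) A M where
  algebraMap_injective := Subtype.val_injective
  isIntegral_iff {x} :=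
    (⟨fun hx => hx.tower_top, isIntegral_trans x⟩ : IsIntegral A x ↔ IsIntegral C x).trans
      IsIntegralClosure.isIntegral_iff

theorem exists_isRegularSpecialization (κ : Type*) [Field κ] (n : ℕ) (K E : Type*)
    [Field K] [Algebra (MvPolynomial (Fin n) (RatFunc κ)) K]
    [IsFractionRing (MvPolynomial (Fin n) (RatFunc κ)) K] [Algebra κ K]
    [IsScalarTower κ (MvPolynomial (Fin n) (RatFunc κ)) K]
    [Field E] [Algebra K E] [FiniteDimensional K E] [Algebra.IsSeparable K E]
    [Algebra (MvPolynomial (Fin n) (RatFunc κ)) E]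
    [IsScalarTower (MvPolynomial (Fin n) (RatFunc κ)) K E] [Algebra (RatFunc κ) E]
    [IsScalarTower (RatFunc κ) (MvPolynomial (Fin n) (RatFunc κ)) E] [Algebra κ E]
    [IsScalarTower κ (MvPolynomial (Fin n) (RatFunc κ)) E] [IsScalarTower κ (RatFunc κ) E] :
    ∃ (t : Fin n → RatFunc κ) (P : Ideal (integralClosure (MvPolynomial (Fin n) (RatFunc κ)) E))
      (_ : P.IsMaximal),
      P.under (MvPolynomial (Fin n) (RatFunc κ)) = RingHom.ker (MvPolynomial.eval t) ∧
      IsRegularSpecialization κ (MvPolynomial (Fin n) (RatFunc κ)) K E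
        (integralClosure (MvPolynomial (Fin n) (RatFunc κ)) E) (RatFunc κ)
        (integralClosure (MvPolynomial (Fin n) (RatFunc κ)) E ⧸ P) := by
  let A := MvPolynomial (Fin n) (RatFunc κ)
  let C := integralClosure A E
  have : IsScalarTower κ K E := .to₁₃₄ κ A K E
  have : IsScalarTower κ (RatFunc κ) C := ⟨fun a b c => Subtype.ext (smul_assoc a b c.1)⟩
  obtain ⟨M, _, _, _, _, _, _⟩ := exists_isGalois_of_isSeparable K E
  algebraize [(algebraMap E M).comp (algebraMap A E), (algebraMap E M).comp (algebraMap κ E),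
    (algebraMap E M).comp (algebraMap (RatFunc κ) E), (algebraMap E M).comp (algebraMap C E)]
  let B := integralClosure C M
  have : IsScalarTower A K M := .to₁₂₄ A K E M
  have : IsScalarTower κ K M := .to₁₂₄ κ K E M
  have : IsScalarTower κ (RatFunc κ) M := .to₁₂₄ κ (RatFunc κ) E M
  have : IsScalarTower A C M := .to₁₂₄ A C E M
  have : IsScalarTower (RatFunc κ) A M := .to₁₂₄ (RatFunc κ) A E M
  have : IsScalarTower (RatFunc κ) C M := .to₁₂₄ (RatFunc κ) C E M
  have : IsScalarTower κ C M := .to₁₂₄ κ C E M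
  have : IsScalarTower A B M := .to₁₃₄ A C B M
  have : IsScalarTower κ (RatFunc κ) B := .to₁₂₄ κ (RatFunc κ) C B
  have : IsScalarTower (RatFunc κ) A B := .to₁₂₄ (RatFunc κ) A C B
  have : IsScalarTower κ A B := .to₁₃₄ κ (RatFunc κ) A B
  have : Algebra.IsIntegral A C := IsIntegralClosure.isIntegral_algebra A E
  have : IsIntegralClosure B A M := isIntegralClosure_integralClosure A C M
  obtain ⟨t, Q, _, hQt, hQ⟩ := exists_isHilbertSpecialization (κ := κ) (n := n) K M B
  let P := Q.under C
  have : P.IsMaximal := Ideal.isMaximal_comap_of_isIntegral_of_isMaximal Q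
  have hP : P.under A = RingHom.ker (MvPolynomial.eval t) := by
    rw [Ideal.under_under, hQt.over]
  let := (MvPolynomial.eval t).toAlgebra
  have : IsScalarTower (RatFunc κ) A (RatFunc κ) := .of_algebraMap_eq fun c =>
    (MvPolynomial.eval_C c).symm
  let := Ideal.Quotient.field P
  let := Ideal.Quotient.field Q
  have : IsScalarTower A (RatFunc κ) (B ⧸ Q) := isScalarTower_quotient_of_ker_le hQt.over.le
  exact ⟨t, P, ‹_›, hP, hQ.isRegularSpecialization E (algebraicClosure_ratFunc_eq_bot κ)
    Ideal.Quotient.mk_surjective⟩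

theorem statement_5_general (κ : Type*) [Field κ] (n : ℕ) (K E : Type*)
    [Field K] [Algebra (MvPolynomial (Fin n) (RatFunc κ)) K]
    [IsFractionRing (MvPolynomial (Fin n) (RatFunc κ)) K] [Algebra κ K]
    [IsScalarTower κ (MvPolynomial (Fin n) (RatFunc κ)) K]
    [Field E] [Algebra K E] [FiniteDimensional K E] [Algebra.IsSeparable K E]
    [Algebra (MvPolynomial (Fin n) (RatFunc κ)) E]
    [IsScalarTower (MvPolynomial (Fin n) (RatFunc κ)) K E] [Algebra (RatFunc κ) E]
    [IsScalarTower (RatFunc κ) (MvPolynomial (Fin n) (RatFunc κ)) E] [Algebra κ E]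
    [IsScalarTower κ (MvPolynomial (Fin n) (RatFunc κ)) E] [IsScalarTower κ (RatFunc κ) E]
    {L G : Type*} [Semiring L] [Algebra (RatFunc κ) L] [Group G]
    (f : L →ₐ[RatFunc κ] integralClosure (MvPolynomial (Fin n) (RatFunc κ)) E)
    (α : G →* (L ≃ₐ[RatFunc κ] L)) (β : (E ≃ₐ[K] E) ≃* G)
    (hβ : ∀ σ x, σ (f x) = f (α (β σ) x))
    (hreg : ∀ c : E, IsAlgebraic κ c → ∃ x, c = f x) :
    ∃ (t : Fin n → RatFunc κ) (P : Ideal (integralClosure (MvPolynomial (Fin n) (RatFunc κ)) E))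
      (_ : P.IsMaximal),
      P.under (MvPolynomial (Fin n) (RatFunc κ)) =
        Ideal.span (Set.range fun i => MvPolynomial.X i - MvPolynomial.C (t i)) ∧
      FiniteDimensional (RatFunc κ)
        (integralClosure (MvPolynomial (Fin n) (RatFunc κ)) E ⧸ P) ∧
      Algebra.IsSeparable (RatFunc κ)
        (integralClosure (MvPolynomial (Fin n) (RatFunc κ)) E ⧸ P) ∧
      ∃ β' : ((integralClosure (MvPolynomial (Fin n) (RatFunc κ)) E ⧸ P) ≃ₐ[RatFunc κ]
          (integralClosure (MvPolynomial (Fin n) (RatFunc κ)) E ⧸ P)) ≃* G,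
        (∀ σ x, σ (Ideal.Quotient.mk P (f x)) = Ideal.Quotient.mk P (f (α (β' σ) x))) ∧
        ∀ z : integralClosure (MvPolynomial (Fin n) (RatFunc κ)) E ⧸ P, IsAlgebraic κ z →
          ∃ x, z = Ideal.Quotient.mk P (f x) := by
  obtain ⟨t, P, hmax, hP, h⟩ := exists_isRegularSpecialization κ n K E
  have hf : ∀ c, IsIntegral κ c → c ∈ f.range := fun c hc => by
    obtain ⟨x, hx⟩ := hreg c (hc.isAlgebraic.algebraMap (A := E))
    exact ⟨x, Subtype.ext hx.symm⟩
  exact ⟨t, P, hmax, hP.trans (ker_eval_eq_span t), h.finiteDimensional, h.isSeparable,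
    h.exists_solution f α β hβ hf⟩

end ResidueField

set_option maxHeartbeats 4000000

/-- **Specialization preserving regularity over `k = κ(T)`** (Proposition `lemma:0`(2)).
Let `κ` be a field, `k = κ(T) = RatFunc κ`, and `α : G → Aut(L/k)` a finite embedding
problem over `k`, with `L` realized inside a fixed algebraic closure `Ω` of
`k(T₁,…,Tₙ)`.  Suppose the induced embedding problem `α_{k(T₁,…,Tₙ)}` has a solution `β`
with solution field `E ⊆ Ω` satisfying `E ∩ κ̄ = L ∩ κ̄` (every element of `E` algebraic
over `κ` lies in `L`).  Let `B` be the integral closure of `k[T₁,…,Tₙ]` in `E` (the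
hypothesis `hLB` records the fact that `L ⊆ B`).  Then there are `t ∈ kⁿ` and a maximal
ideal `P` of `B` lying over `⟨T₁ − t₁, …, Tₙ − tₙ⟩` such that the residue field
`E_t = B ⧸ P` is the solution field of a solution to `α` which moreover is regular:
every element of `E_t` algebraic over `κ` lies in (the image of) `L`. -/
theorem statement_5 (κ : Type) [Field κ]
    (G : Type) [Group G] [Finite G] (n : ℕ) (hn : 0 < n)
    (L : IntermediateField (RatFunc κ)
      (AlgebraicClosure (FractionRing (MvPolynomial (Fin n) (RatFunc κ)))))
    [FiniteDimensional (RatFunc κ) L] [Algebra.IsSeparable (RatFunc κ) L]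
    (α : G →* (L ≃ₐ[RatFunc κ] L)) (hα : Function.Surjective α)
    (E : IntermediateField (FractionRing (MvPolynomial (Fin n) (RatFunc κ)))
      (AlgebraicClosure (FractionRing (MvPolynomial (Fin n) (RatFunc κ)))))
    [FiniteDimensional (FractionRing (MvPolynomial (Fin n) (RatFunc κ))) E]
    [Algebra.IsSeparable (FractionRing (MvPolynomial (Fin n) (RatFunc κ))) E]
    (hLE : (L : Set (AlgebraicClosure (FractionRing (MvPolynomial (Fin n) (RatFunc κ)))))
      ⊆ (E : Set (AlgebraicClosure (FractionRing (MvPolynomial (Fin n) (RatFunc κ))))))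
    (β : (E ≃ₐ[FractionRing (MvPolynomial (Fin n) (RatFunc κ))] E) ≃* G)
    (hβ : ∀ (σ : E ≃ₐ[FractionRing (MvPolynomial (Fin n) (RatFunc κ))] E)
        (x : AlgebraicClosure (FractionRing (MvPolynomial (Fin n) (RatFunc κ))))
        (hx : x ∈ L),
      ((σ ⟨x, hLE hx⟩ : E)
          : AlgebraicClosure (FractionRing (MvPolynomial (Fin n) (RatFunc κ)))) =
        ((α (β σ) ⟨x, hx⟩ : L)
          : AlgebraicClosure (FractionRing (MvPolynomial (Fin n) (RatFunc κ)))))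
    (hreg : ∀ x : AlgebraicClosure (FractionRing (MvPolynomial (Fin n) (RatFunc κ))),
      x ∈ E → IsAlgebraic κ x → x ∈ L)
    (hLB : ∀ (x : AlgebraicClosure (FractionRing (MvPolynomial (Fin n) (RatFunc κ))))
        (hx : x ∈ L),
      (⟨x, hLE hx⟩ : E) ∈ integralClosure (MvPolynomial (Fin n) (RatFunc κ)) E) :
    ∃ (t : Fin n → RatFunc κ)
      (P : Ideal (integralClosure (MvPolynomial (Fin n) (RatFunc κ)) E))
      (_ : P.IsMaximal),
      Ideal.comap (algebraMap (MvPolynomial (Fin n) (RatFunc κ))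
          (integralClosure (MvPolynomial (Fin n) (RatFunc κ)) E)) P =
        Ideal.span (Set.range fun i => MvPolynomial.X i - MvPolynomial.C (t i)) ∧
      haveI : IsScalarTower (RatFunc κ) (MvPolynomial (Fin n) (RatFunc κ)) E :=
        ⟨fun a b c => Subtype.ext (smul_assoc a b
          (c : AlgebraicClosure (FractionRing (MvPolynomial (Fin n) (RatFunc κ)))))⟩
      haveI : IsScalarTower κ (MvPolynomial (Fin n) (RatFunc κ)) E :=
        ⟨fun a b c => Subtype.ext (smul_assoc a b
          (c : AlgebraicClosure (FractionRing (MvPolynomial (Fin n) (RatFunc κ)))))⟩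
      FiniteDimensional (RatFunc κ)
        (integralClosure (MvPolynomial (Fin n) (RatFunc κ)) E ⧸ P) ∧
      Algebra.IsSeparable (RatFunc κ)
        (integralClosure (MvPolynomial (Fin n) (RatFunc κ)) E ⧸ P) ∧
      ∃ β' : ((integralClosure (MvPolynomial (Fin n) (RatFunc κ)) E ⧸ P) ≃ₐ[RatFunc κ]
          (integralClosure (MvPolynomial (Fin n) (RatFunc κ)) E ⧸ P)) ≃* G,
        (∀ (σ : (integralClosure (MvPolynomial (Fin n) (RatFunc κ)) E ⧸ P) ≃ₐ[RatFunc κ]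
            (integralClosure (MvPolynomial (Fin n) (RatFunc κ)) E ⧸ P))
          (x : AlgebraicClosure (FractionRing (MvPolynomial (Fin n) (RatFunc κ))))
          (hx : x ∈ L),
          σ (Ideal.Quotient.mk P ⟨⟨x, hLE hx⟩, hLB x hx⟩) =
            Ideal.Quotient.mk P ⟨⟨((α (β' σ) ⟨x, hx⟩ : L)
                : AlgebraicClosure (FractionRing (MvPolynomial (Fin n) (RatFunc κ)))),
              hLE (α (β' σ) ⟨x, hx⟩).2⟩,
              hLB _ (α (β' σ) ⟨x, hx⟩).2⟩) ∧
        (∀ z : integralClosure (MvPolynomial (Fin n) (RatFunc κ)) E ⧸ P,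
          IsAlgebraic κ z →
            ∃ (x : AlgebraicClosure (FractionRing (MvPolynomial (Fin n) (RatFunc κ))))
              (hx : x ∈ L),
              z = Ideal.Quotient.mk P ⟨⟨x, hLE hx⟩, hLB x hx⟩) := by
  have : IsScalarTower (RatFunc κ) (MvPolynomial (Fin n) (RatFunc κ)) E :=
    ⟨fun a b c => Subtype.ext (smul_assoc a b c.1)⟩
  have : IsScalarTower κ (MvPolynomial (Fin n) (RatFunc κ)) E :=
    ⟨fun a b c => Subtype.ext (smul_assoc a b c.1)⟩
  have : IsScalarTower κ (RatFunc κ) E := ⟨fun a b c => Subtype.ext (smul_assoc a b c.1)⟩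
  have : IsScalarTower κ E (AlgebraicClosure (FractionRing (MvPolynomial (Fin n) (RatFunc κ)))) :=
    .of_algebraMap_eq fun _ => rfl
  let f : L →ₐ[RatFunc κ] integralClosure (MvPolynomial (Fin n) (RatFunc κ)) E :=
    { toFun := fun x => ⟨⟨x, hLE x.2⟩, hLB x x.2⟩
      map_one' := rfl
      map_mul' := fun _ _ => rfl
      map_zero' := rfl
      map_add' := fun _ _ => rfl
      commutes' := fun _ => rfl }
  obtain ⟨t, P, hmax, hP, hfin, hsep, β', hβ', hκ⟩ := statement_5_general κ n
    (FractionRing (MvPolynomial (Fin n) (RatFunc κ))) E f α β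
    (fun σ x => Subtype.ext (hβ σ x x.2)) fun c hc => ⟨⟨c, hreg c c.2 hc.algebraMap⟩, rfl⟩
  refine ⟨t, P, hmax, hP, hfin, hsep, β', fun σ x hx => hβ' σ ⟨x, hx⟩, fun z hz => ?_⟩
  obtain ⟨x, hx⟩ := hκ z hz
  exact ⟨x, x.2, hx⟩
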